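/- arXiv:2604.13894 — 5 statements merged into one kernel-verified Lean document; each statement's English description precedes it below -/
import Mathlib

section
/- Let H = Σ_{k=1}^d h_k P_k and let S be a bounded operator on ℋ belonging to the bicommutant of H, i.e. S commutes with every bounded operator that commutes with H. Then for every ε ∈ [0,1] with ε ≤ η/(vρ) and every t ∈ ℝ, ‖e^{it(H+εV(ε))} S e^{−it(H+εV(ε))} − S‖ ≤ β (v/η) ‖S‖ ε. -/
open scoped BigOperators

section aux

variable {ℋ : Type*} [NormedAddCommGroup ℋ] [InnerProductSpace ℂ ℋ] [CompleteSpace ℋ]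

lemma aux_pyth {d : ℕ} (P : Fin d → ℋ →L[ℂ] ℋ)
    (hPsa : ∀ k, IsSelfAdjoint (P k))
    (hPorth : ∀ k l, k ≠ l → P k * P l = 0) (z : Fin d → ℋ) :
    ‖∑ k, P k (z k)‖ ^ 2 = ∑ k, ‖P k (z k)‖ ^ 2 := by
  have key : ∀ k l, k ≠ l → inner ℂ (P k (z k)) (P l (z l)) = 0 := by
    intro k l hkl
    have h1 : inner ℂ (P k (z k)) (P l (z l)) = inner ℂ (z k) (P k (P l (z l))) := by
      have := ContinuousLinearMap.adjoint_inner_right (P k) (z k) (P l (z l))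
      rw [← this]
      rw [(ContinuousLinearMap.isSelfAdjoint_iff'.mp (hPsa k))]
    have h2 : P k (P l (z l)) = (P k * P l) (z l) := rfl
    rw [h1, h2, hPorth k l hkl]; simp
  have h3 : ((‖∑ k, P k (z k)‖ ^ 2 : ℝ) : ℂ) = ((∑ k, ‖P k (z k)‖ ^ 2 : ℝ) : ℂ) := by
    push_cast
    have e : ∀ w : ℋ, ((‖w‖ : ℂ)) ^ 2 = inner ℂ w w := fun w => (inner_self_eq_norm_sq_to_K w).symm
    simp only [e]
    rw [sum_inner]
    refine Finset.sum_congr rfl fun k _ => ?_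
    rw [inner_sum]
    rw [Finset.sum_eq_single k]
    · intro l _ hl; exact key k l (Ne.symm hl)
    · simp
  exact_mod_cast h3

lemma aux_parseval {d : ℕ} (P : Fin d → ℋ →L[ℂ] ℋ)
    (hPsa : ∀ k, IsSelfAdjoint (P k))
    (hPorth : ∀ k l, k ≠ l → P k * P l = 0) (hPsum : ∑ k, P k = 1) (z : ℋ) :
    ∑ k, ‖P k z‖ ^ 2 = ‖z‖ ^ 2 := by
  rw [← aux_pyth P hPsa hPorth (fun _ => z)]
  congr 2
  have := congrArg (fun T : ℋ →L[ℂ] ℋ => T z) hPsum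
  simpa using this

/-- Schur multiplier -/
def schur {d : ℕ} (P : Fin d → ℋ →L[ℂ] ℋ) (c : Fin d → Fin d → ℝ) (T : ℋ →L[ℂ] ℋ) :
    ℋ →L[ℂ] ℋ := ∑ k, ∑ l, (c k l : ℂ) • (P k * T * P l)

lemma schur_norm {d : ℕ} (P : Fin d → ℋ →L[ℂ] ℋ)
    (hPsa : ∀ k, IsSelfAdjoint (P k))
    (hPorth : ∀ k l, k ≠ l → P k * P l = 0) (hPsum : ∑ k, P k = 1)
    (c : Fin d → Fin d → ℝ) (K : ℝ) (hK : 0 ≤ K) (hc : ∀ l, ∑ k, c k l ^ 2 ≤ K ^ 2)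
    (T : ℋ →L[ℂ] ℋ) : ‖schur P c T‖ ≤ K * ‖T‖ := by
  have hle : ∀ k z, ‖P k z‖ ≤ ‖z‖ := by
    intro k z
    have h1 := aux_parseval P hPsa hPorth hPsum z
    have h2 : ‖P k z‖ ^ 2 ≤ ∑ k, ‖P k z‖ ^ 2 :=
      Finset.single_le_sum (f := fun k => ‖P k z‖ ^ 2) (fun i _ => by positivity) (Finset.mem_univ k)
    exact le_of_sq_le_sq (by linarith) (norm_nonneg _)
  refine ContinuousLinearMap.opNorm_le_bound _ (by positivity) fun ψ => ?_
  set y : Fin d → ℋ := fun k => ∑ l, P l ((c k l : ℂ) • ψ) with hy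
  have e1 : schur P c T ψ = ∑ k, P k (T (y k)) := by
    simp [schur, hy, ContinuousLinearMap.sum_apply, map_sum]
  have e2 : ∀ k, ‖y k‖ ^ 2 = ∑ l, c k l ^ 2 * ‖P l ψ‖ ^ 2 := by
    intro k
    rw [hy]; simp only
    rw [aux_pyth P hPsa hPorth (fun l => (c k l : ℂ) • ψ)]
    refine Finset.sum_congr rfl fun l _ => ?_
    rw [map_smul, norm_smul, mul_pow]
    simp
  refine le_of_sq_le_sq ?_ (by positivity)
  rw [e1, aux_pyth P hPsa hPorth]
  calc ∑ k, ‖P k (T (y k))‖ ^ 2 ≤ ∑ k, ‖T‖ ^ 2 * ‖y k‖ ^ 2 := by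
        refine Finset.sum_le_sum fun k _ => ?_
        rw [← mul_pow]
        exact pow_le_pow_left₀ (norm_nonneg _) ((hle _ _).trans (T.le_opNorm _)) 2
    _ = ‖T‖ ^ 2 * ∑ l, (∑ k, c k l ^ 2) * ‖P l ψ‖ ^ 2 := by
        rw [← Finset.mul_sum]
        congr 1
        simp only [e2, Finset.sum_mul]
        exact Finset.sum_comm
    _ ≤ ‖T‖ ^ 2 * ∑ l, K ^ 2 * ‖P l ψ‖ ^ 2 := by
        gcongr with l _
        exact hc l
    _ = (K * ‖T‖ * ‖ψ‖) ^ 2 := by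
        rw [← Finset.mul_sum, aux_parseval P hPsa hPorth hPsum]; ring

lemma schur_sub {d : ℕ} (P : Fin d → ℋ →L[ℂ] ℋ) (c : Fin d → Fin d → ℝ) (T T' : ℋ →L[ℂ] ℋ) :
    schur P c (T - T') = schur P c T - schur P c T' := by
  simp [schur, mul_sub, sub_mul, smul_sub, Finset.sum_sub_distrib]

lemma P_mul_schur {d : ℕ} (P : Fin d → ℋ →L[ℂ] ℋ)
    (hPidem : ∀ k, P k * P k = P k)
    (hPorth : ∀ k l, k ≠ l → P k * P l = 0) (c : Fin d → Fin d → ℝ) (T : ℋ →L[ℂ] ℋ) (k : Fin d) :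
    P k * schur P c T = ∑ l, (c k l : ℂ) • (P k * T * P l) := by
  rw [schur, Finset.mul_sum, Finset.sum_eq_single k]
  · rw [Finset.mul_sum]
    refine Finset.sum_congr rfl fun l _ => ?_
    rw [mul_smul_comm, ← mul_assoc, ← mul_assoc, hPidem]
  · intro j _ hj
    rw [Finset.mul_sum]
    refine Finset.sum_eq_zero fun l _ => ?_
    rw [mul_smul_comm, ← mul_assoc, ← mul_assoc, hPorth k j (Ne.symm hj)]; simp
  · simp

lemma schur_mul_P {d : ℕ} (P : Fin d → ℋ →L[ℂ] ℋ)
    (hPidem : ∀ k, P k * P k = P k)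
    (hPorth : ∀ k l, k ≠ l → P k * P l = 0) (c : Fin d → Fin d → ℝ) (T : ℋ →L[ℂ] ℋ) (l : Fin d) :
    schur P c T * P l = ∑ k, (c k l : ℂ) • (P k * T * P l) := by
  rw [schur, Finset.sum_mul]
  refine Finset.sum_congr rfl fun k _ => ?_
  rw [Finset.sum_mul, Finset.sum_eq_single l]
  · rw [smul_mul_assoc, mul_assoc, hPidem]
  · intro j _ hj
    rw [smul_mul_assoc, mul_assoc, hPorth j l hj]; simp
  · simp

lemma H_mul_schur {d : ℕ} (P : Fin d → ℋ →L[ℂ] ℋ)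
    (hPidem : ∀ k, P k * P k = P k)
    (hPorth : ∀ k l, k ≠ l → P k * P l = 0) (h : Fin d → ℝ)
    (c : Fin d → Fin d → ℝ) (T : ℋ →L[ℂ] ℋ) :
    (∑ k, (h k : ℂ) • P k) * schur P c T - schur P c T * (∑ k, (h k : ℂ) • P k)
      = schur P (fun k l => (h k - h l) * c k l) T := by
  rw [Finset.sum_mul, Finset.mul_sum]
  simp only [smul_mul_assoc, mul_smul_comm, P_mul_schur P hPidem hPorth,
    schur_mul_P P hPidem hPorth, Finset.smul_sum, smul_smul]
  rw [Finset.sum_comm (f := fun x i => ((h x : ℂ) * (c i x : ℂ)) • (P i * T * P x)),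
    ← Finset.sum_sub_distrib, schur]
  refine Finset.sum_congr rfl fun k _ => ?_
  rw [← Finset.sum_sub_distrib]
  refine Finset.sum_congr rfl fun l _ => ?_
  rw [← sub_smul]; push_cast; congr 1; ring

lemma schur_one {d : ℕ} (P : Fin d → ℋ →L[ℂ] ℋ) (hPsum : ∑ k, P k = 1) (T : ℋ →L[ℂ] ℋ) :
    schur P (fun _ _ => 1) T = T := by
  simp only [schur, Complex.ofReal_one, one_smul, ← Finset.mul_sum, hPsum, mul_one, ← Finset.sum_mul, one_mul]

/-- diagonal coefficients -/
def dg {d : ℕ} : Fin d → Fin d → ℝ := fun k l => if k = l then 1 else 0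

/-- gap coefficients -/
noncomputable def gm {d : ℕ} (h : Fin d → ℝ) : Fin d → Fin d → ℝ := fun k l => (h k - h l)⁻¹

lemma schur_csub {d : ℕ} (P : Fin d → ℋ →L[ℂ] ℋ) (c c' : Fin d → Fin d → ℝ) (T : ℋ →L[ℂ] ℋ) :
    schur P (fun k l => c k l - c' k l) T = schur P c T - schur P c' T := by
  simp [schur, sub_smul, Finset.sum_sub_distrib]

lemma aux_schur_dg {d : ℕ} (P : Fin d → ℋ →L[ℂ] ℋ) (T : ℋ →L[ℂ] ℋ) :
    schur P dg T = ∑ k, P k * T * P k := by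
  simp [schur, dg]

lemma aux_nat_sum (n : ℕ) : ∑ i ∈ Finset.range n, (1 : ℝ) / ((i : ℝ) + 1) ^ 2 ≤ Real.pi ^ 2 / 6 := by
  have h := hasSum_zeta_two
  have h2 := sum_le_hasSum (Finset.range (n+1)) (fun i _ => by positivity) h
  rw [Finset.sum_range_succ'] at h2
  simpa using h2

lemma aux_gap {d : ℕ} (h : Fin d → ℝ) (hmono : StrictMono h) (η : ℝ) (hη : 0 < η)
    (hgap : ∀ k l, k ≠ l → η ≤ |h k - h l|) :
    ∀ n : ℕ, ∀ k l : Fin d, (l : ℕ) = k + n → η * n ≤ h l - h k := by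
  intro n
  induction n with
  | zero => intro k l hkl; have : l = k := Fin.ext (by simpa using hkl); simp [this]
  | succ n ih =>
    intro k l hkl
    have hm : (k : ℕ) + n < d := by have := l.2; omega
    have h1 := ih k ⟨k + n, hm⟩ rfl
    have hlt : (⟨k + n, hm⟩ : Fin d) < l := by rw [Fin.lt_def]; simp; omega
    have h2 := hgap l ⟨k+n, hm⟩ (ne_of_gt hlt)
    rw [abs_of_pos (by linarith [hmono hlt])] at h2
    push_cast; linarith

lemma aux_gmsum {d : ℕ} (h : Fin d → ℝ) (hmono : StrictMono h) (η : ℝ) (hη : 0 < η)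
    (hgap : ∀ k l, k ≠ l → η ≤ |h k - h l|) (l : Fin d) :
    ∑ k, gm h k l ^ 2 ≤ (Real.pi / Real.sqrt 3 / η) ^ 2 := by
  have hg := aux_gap h hmono η hη hgap
  have hA : ∑ k ∈ Finset.univ.filter (fun k : Fin d => k < l), gm h k l ^ 2 ≤
      (Real.pi ^ 2 / 6) / η ^ 2 := by
    calc _ ≤ ∑ k ∈ Finset.univ.filter (fun k : Fin d => k < l),
          (fun i : ℕ => (1 : ℝ) / ((i : ℝ) + 1) ^ 2 / η ^ 2) ((l : ℕ) - 1 - k) := by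
          refine Finset.sum_le_sum fun k hk => ?_
          have hk' : k < l := by simpa using hk
          have hk2 : (k : ℕ) < l := hk'
          have := hg ((l : ℕ) - 1 - k + 1) k l (by omega)
          push_cast at this
          simp only [gm]
          rw [div_div, one_div, inv_pow]
          apply inv_anti₀ (by positivity)
          rw [← mul_pow, ← sq_abs (h k - h l), abs_sub_comm]
          apply pow_le_pow_left₀ (by positivity)
          rw [mul_comm]
          exact this.trans (le_abs_self _)
      _ = ∑ i ∈ (Finset.univ.filter (fun k : Fin d => k < l)).image (fun k : Fin d => (l : ℕ) - 1 - k),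
          (fun i : ℕ => (1 : ℝ) / ((i : ℝ) + 1) ^ 2 / η ^ 2) i := by
          rw [Finset.sum_image]
          intro a ha b hb hab
          have ha' : (a : ℕ) < l := by simpa using ha
          have hb' : (b : ℕ) < l := by simpa using hb
          simp only at hab
          exact Fin.ext (by omega)
      _ ≤ ∑ i ∈ Finset.range d, (fun i : ℕ => (1 : ℝ) / ((i : ℝ) + 1) ^ 2 / η ^ 2) i := by
          apply Finset.sum_le_sum_of_subset_of_nonneg
          · intro i hi
            simp only [Finset.mem_image] at hi
            obtain ⟨a, _, rfl⟩ := hi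
            have := l.2
            simp; omega
          · intro i _ _; positivity
      _ ≤ _ := by
          simp only
          rw [← Finset.sum_div]
          gcongr
          exact aux_nat_sum d
  have hB : ∑ k ∈ Finset.univ.filter (fun k : Fin d => ¬ k < l), gm h k l ^ 2 ≤
      (Real.pi ^ 2 / 6) / η ^ 2 := by
    have : ∑ k ∈ Finset.univ.filter (fun k : Fin d => ¬ k < l), gm h k l ^ 2
       = ∑ k ∈ Finset.univ.filter (fun k : Fin d => l < k), gm h k l ^ 2 := by
      symm
      apply Finset.sum_subset
      · intro k hk
        have : l < k := by simpa using hk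
        simpa using this.le
      · intro k hk hk'
        have h1 : l ≤ k := by simpa using hk
        have h2 : k ≤ l := by simpa using hk'
        simp [gm, le_antisymm h1 h2]
    rw [this]
    calc _ ≤ ∑ k ∈ Finset.univ.filter (fun k : Fin d => l < k),
          (fun i : ℕ => (1 : ℝ) / ((i : ℝ) + 1) ^ 2 / η ^ 2) ((k : ℕ) - 1 - l) := by
          refine Finset.sum_le_sum fun k hk => ?_
          have hk' : l < k := by simpa using hk
          have hk2 : (l : ℕ) < k := hk'
          have := hg ((k : ℕ) - 1 - l + 1) l k (by omega)
          push_cast at this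
          simp only [gm]
          rw [div_div, one_div, inv_pow]
          apply inv_anti₀ (by positivity)
          rw [← mul_pow, ← sq_abs (h k - h l)]
          apply pow_le_pow_left₀ (by positivity)
          rw [mul_comm]
          exact this.trans (le_abs_self _)
      _ = ∑ i ∈ (Finset.univ.filter (fun k : Fin d => l < k)).image (fun k : Fin d => (k : ℕ) - 1 - l),
          (fun i : ℕ => (1 : ℝ) / ((i : ℝ) + 1) ^ 2 / η ^ 2) i := by
          rw [Finset.sum_image]
          intro a ha b hb hab
          have ha' : (l : ℕ) < a := by simpa using ha
          have hb' : (l : ℕ) < b := by simpa using hb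
          simp only at hab
          exact Fin.ext (by omega)
      _ ≤ ∑ i ∈ Finset.range d, (fun i : ℕ => (1 : ℝ) / ((i : ℝ) + 1) ^ 2 / η ^ 2) i := by
          apply Finset.sum_le_sum_of_subset_of_nonneg
          · intro i hi
            simp only [Finset.mem_image] at hi
            obtain ⟨a, _, rfl⟩ := hi
            have := a.2
            simp; omega
          · intro i _ _; positivity
      _ ≤ _ := by
          simp only
          rw [← Finset.sum_div]
          gcongr
          exact aux_nat_sum d
  rw [← Finset.sum_filter_add_sum_filter_not Finset.univ (fun k : Fin d => k < l)]
  have h3 : (Real.pi / Real.sqrt 3 / η) ^ 2 = (Real.pi ^ 2 / 6) / η ^ 2 + (Real.pi ^ 2 / 6) / η ^ 2 := by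
    rw [div_pow, div_pow, Real.sq_sqrt (by norm_num)]; ring
  rw [h3]; exact add_le_add hA hB

lemma aux_fix {E : Type*} [NormedAddCommGroup E] [CompleteSpace E] (F : E → E) (r : ℝ) (hr : 0 ≤ r)
    (h1 : ∀ x, ‖x‖ ≤ r → ‖F x‖ ≤ r)
    (h2 : ∀ x y, ‖x‖ ≤ r → ‖y‖ ≤ r → ‖F x - F y‖ ≤ (1/2) * ‖x - y‖) :
    ∃ x, ‖x‖ ≤ r ∧ F x = x := by
  have hm : Set.MapsTo F (Metric.closedBall 0 r) (Metric.closedBall 0 r) := by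
    intro x hx; simp only [mem_closedBall_zero_iff] at hx ⊢; exact h1 x hx
  have hc : IsComplete (Metric.closedBall (0 : E) r) := Metric.isClosed_closedBall.isComplete
  have hcon : ContractingWith (1/2) (hm.restrict F _ _) := by
    refine ⟨by rw [← NNReal.coe_lt_coe]; norm_num, LipschitzWith.of_dist_le_mul ?_⟩
    rintro ⟨x, hx⟩ ⟨y, hy⟩
    simp only [mem_closedBall_zero_iff] at hx hy
    have := h2 x y hx hy
    simpa [Subtype.dist_eq, dist_eq_norm] using this
  obtain ⟨y, hy, hfix, -⟩ := hcon.exists_fixedPoint' hc hm (x := 0) (by simpa using hr) (edist_ne_top _ _)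
  exact ⟨y, by simpa using hy, hfix⟩

lemma aux_X {d : ℕ} (P : Fin d → ℋ →L[ℂ] ℋ) (h : Fin d → ℝ)
    (hPsa : ∀ k, IsSelfAdjoint (P k))
    (hPidem : ∀ k, P k * P k = P k)
    (hPorth : ∀ k l, k ≠ l → P k * P l = 0)
    (hPsum : ∑ k, P k = 1)
    (hmono : StrictMono h)
    (η : ℝ) (hη : 0 < η)
    (hgap : ∀ k l, k ≠ l → η ≤ |h k - h l|)
    (H : ℋ →L[ℂ] ℋ) (hH : H = ∑ k, ((h k : ℂ)) • P k)
    (B : ℋ →L[ℂ] ℋ) (u : ℝ) (hu : Real.pi / Real.sqrt 3 / η * ‖B‖ ≤ u) (hu8 : u ≤ 1 / 8) :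
    ∃ X E : ℋ →L[ℂ] ℋ, ‖X‖ ≤ 8 / 5 * u ∧ E * H = H * E ∧
      (H + B) * (1 + X) = (1 + X) * (H + E) := by
  set K := Real.pi / Real.sqrt 3 / η with hK
  have hK0 : 0 ≤ K := by positivity
  have hu0 : 0 ≤ u := le_trans (by positivity) hu
  have hΓ : ∀ T, ‖schur P (gm h) T‖ ≤ K * ‖T‖ := fun T =>
    schur_norm P hPsa hPorth hPsum _ K hK0 (aux_gmsum h hmono η hη hgap) T
  have hD : ∀ T, ‖schur P dg T‖ ≤ ‖T‖ := fun T => by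
    have := schur_norm P hPsa hPorth hPsum dg 1 zero_le_one (fun l => by simp [dg]) T
    simpa using this
  have hone : ‖(1 : ℋ →L[ℂ] ℋ)‖ ≤ 1 := ContinuousLinearMap.norm_id_le
  set r := 8 / 5 * u with hr
  have hr0 : 0 ≤ r := by positivity
  have hr5 : r ≤ 1 / 5 := by rw [hr]; linarith
  set Q : (ℋ →L[ℂ] ℋ) → (ℋ →L[ℂ] ℋ) := fun X => B * (1 + X) with hQ
  have hQn : ∀ X, ‖X‖ ≤ r → ‖Q X‖ ≤ ‖B‖ * (1 + r) := by
    intro X hX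
    refine (norm_mul_le _ _).trans ?_
    gcongr
    exact (norm_add_le _ _).trans (add_le_add hone hX)
  have hQs : ∀ X Y, ‖Q X - Q Y‖ ≤ ‖B‖ * ‖X - Y‖ := by
    intro X Y
    have : Q X - Q Y = B * (X - Y) := by simp only [hQ]; noncomm_ring
    rw [this]; exact norm_mul_le _ _
  obtain ⟨X, hXr, hX⟩ := aux_fix
    (fun X => schur P (gm h) (X * schur P dg (Q X) - Q X)) r hr0
    (by
      intro X hX
      refine (hΓ _).trans ?_
      have h1 : ‖X * schur P dg (Q X) - Q X‖ ≤ r * (‖B‖ * (1 + r)) + ‖B‖ * (1 + r) := by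
        refine (norm_sub_le _ _).trans (add_le_add ((norm_mul_le _ _).trans ?_) (hQn X hX))
        gcongr
        exact (hD _).trans (hQn X hX)
      calc K * _ ≤ K * (r * (‖B‖ * (1 + r)) + ‖B‖ * (1 + r)) := by gcongr
        _ = (K * ‖B‖) * (1 + r) ^ 2 := by ring
        _ ≤ u * (1 + 1/5) ^ 2 := by gcongr
        _ ≤ r := by rw [hr]; linarith)
    (by
      intro X Y hX hY
      rw [← schur_sub]
      refine (hΓ _).trans ?_
      have e : X * schur P dg (Q X) - Q X - (Y * schur P dg (Q Y) - Q Y)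
          = (X - Y) * schur P dg (Q X) + Y * schur P dg (Q X - Q Y) - (Q X - Q Y) := by
        rw [schur_sub]; noncomm_ring
      have h1 : ‖X * schur P dg (Q X) - Q X - (Y * schur P dg (Q Y) - Q Y)‖ ≤
          ‖X - Y‖ * (‖B‖ * (1 + r)) + r * (‖B‖ * ‖X - Y‖) + ‖B‖ * ‖X - Y‖ := by
        rw [e]
        refine (norm_sub_le _ _).trans (add_le_add ((norm_add_le _ _).trans
          (add_le_add ((norm_mul_le _ _).trans ?_) ((norm_mul_le _ _).trans ?_))) (hQs X Y))
        · gcongr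
          exact (hD _).trans (hQn X hX)
        · gcongr
          exact (hD _).trans (hQs X Y)
      calc K * _ ≤ K * (‖X - Y‖ * (‖B‖ * (1 + r)) + r * (‖B‖ * ‖X - Y‖) + ‖B‖ * ‖X - Y‖) := by
            gcongr
        _ = (K * ‖B‖) * (2 + 2 * r) * ‖X - Y‖ := by ring
        _ ≤ (1/8) * (2 + 2 * (1/5)) * ‖X - Y‖ := by
            gcongr
            exact hu.trans hu8
        _ ≤ _ := by nlinarith [norm_nonneg (X - Y)])
  set E := schur P dg (Q X) with hE
  have hPE : ∀ k, P k * E = E * P k := by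
    intro k
    rw [hE, P_mul_schur P hPidem hPorth, schur_mul_P P hPidem hPorth]
    simp [dg]
  have hEH : E * H = H * E := by
    rw [hH, Finset.mul_sum, Finset.sum_mul]
    refine Finset.sum_congr rfl fun k _ => ?_
    rw [mul_smul_comm, smul_mul_assoc, hPE]
  refine ⟨X, E, hXr, hEH, ?_⟩
  have hcomm : H * X - X * H = (X * E - Q X) - schur P dg (X * E - Q X) := by
    have h1 := H_mul_schur P hPidem hPorth h (gm h) (X * E - Q X)
    rw [hX, ← hH] at h1
    rw [h1]
    have h2 : (fun k l => (h k - h l) * gm h k l) = fun k l => (fun _ _ => (1:ℝ)) k l - dg k l := by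
      funext k l
      by_cases hkl : k = l
      · simp [hkl, dg]
      · have : h k - h l ≠ 0 := sub_ne_zero.mpr (fun hh => hkl (hmono.injective hh))
        simp [dg, gm, hkl, this]
    rw [h2, schur_csub, schur_one P hPsum]
  have hd0 : schur P dg (X * E) = 0 := by
    rw [aux_schur_dg]
    refine Finset.sum_eq_zero fun k _ => ?_
    have h1 : P k * X * P k = 0 := by
      rw [← hX, P_mul_schur P hPidem hPorth, Finset.sum_mul]
      refine Finset.sum_eq_zero fun l _ => ?_
      by_cases hkl : l = k
      · simp [hkl, gm]
      · rw [smul_mul_assoc, mul_assoc, hPorth l k hkl]; simp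
    calc P k * (X * E) * P k = P k * X * (E * P k) := by noncomm_ring
      _ = (P k * X * P k) * E := by rw [← hPE]; noncomm_ring
      _ = 0 := by rw [h1, zero_mul]
  rw [schur_sub, hd0, ← hE] at hcomm
  have h5 : H * X = X * H + (X * E - B * (1 + X) + E) := by
    have : H * X = (H * X - X * H) + X * H := by abel
    rw [this, hcomm]; simp only [hQ]; abel
  have : (H + B) * (1 + X) = H + H * X + B * (1 + X) := by noncomm_ring
  rw [this, h5]; noncomm_ring

lemma aux_final (A S W X D : ℋ →L[ℂ] ℋ) (hA : IsSelfAdjoint A) (hW : W = 1 + X) (x : ℝ)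
    (hx : ‖X‖ ≤ x) (hx1 : x < 1) (hAW : A * W = W * D) (hSD : S * D = D * S) (t : ℝ) :
    ‖NormedSpace.exp ((Complex.I * t) • A) * S * NormedSpace.exp ((-(Complex.I * t)) • A) - S‖ ≤
      4 * ‖S‖ * (x / (1 - x)) := by
  let : NormedAlgebra ℚ (ℋ →L[ℂ] ℋ) := NormedAlgebra.restrictScalars ℚ ℂ _
  have hX1 : ‖-X‖ < 1 := by rw [norm_neg]; linarith
  obtain ⟨w, hw⟩ : ∃ w : (ℋ →L[ℂ] ℋ)ˣ, (w : ℋ →L[ℂ] ℋ) = W :=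
    ⟨Units.oneSub (-X) hX1, by simp [hW]⟩
  set Wi : ℋ →L[ℂ] ℋ := ((w⁻¹ : (ℋ →L[ℂ] ℋ)ˣ) : ℋ →L[ℂ] ℋ) with hWi
  have hWWi : W * Wi = 1 := by rw [← hw, hWi]; simp
  have hWiW : Wi * W = 1 := by rw [← hw, hWi]; simp
  set S' := W * S * Wi with hS'
  have hA' : A = W * D * Wi := by rw [← hAW, mul_assoc, hWWi, mul_one]
  have hcomm : Commute S' A := by
    show S' * A = A * S'
    rw [hA', hS']
    calc W * S * Wi * (W * D * Wi) = W * S * (Wi * W) * D * Wi := by noncomm_ring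
      _ = W * (S * D) * Wi := by rw [hWiW]; noncomm_ring
      _ = W * D * (1 : ℋ →L[ℂ] ℋ) * S * Wi := by rw [hSD]; noncomm_ring
      _ = _ := by rw [← hWiW]; noncomm_ring
  set Z := S' - S with hZ
  have hZn : ‖Z‖ ≤ 2 * ‖S‖ * (x / (1 - x)) := by
    have h1 : Z = X * S - S * X - Z * X := by
      have : Z * W = W * S - S * W := by
        rw [hZ, hS', sub_mul, mul_assoc (W * S), hWiW, mul_one]
      rw [hW] at this
      have h2 : Z = Z * (1 + X) - Z * X := by noncomm_ring
      rw [this] at h2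
      refine h2.trans ?_
      noncomm_ring
    have h2 : ‖Z‖ ≤ ‖X‖ * ‖S‖ + ‖S‖ * ‖X‖ + ‖Z‖ * ‖X‖ := by
      conv_lhs => rw [h1]
      exact (norm_sub_le _ _).trans (add_le_add ((norm_sub_le _ _).trans
        (add_le_add (norm_mul_le _ _) (norm_mul_le _ _))) (norm_mul_le _ _))
    rw [← mul_div_assoc, le_div_iff₀ (by linarith)]
    nlinarith [norm_nonneg Z, norm_nonneg S, norm_nonneg X,
      mul_le_mul_of_nonneg_left hx (norm_nonneg Z), mul_le_mul_of_nonneg_left hx (norm_nonneg S)]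
  set U := NormedSpace.exp ((Complex.I * t) • A) with hU
  set U' := NormedSpace.exp ((-(Complex.I * t)) • A) with hU'
  have hskew : ∀ s : ℝ, (Complex.I * s) • A ∈ skewAdjoint (ℋ →L[ℂ] ℋ) := by
    intro s
    rw [skewAdjoint.mem_iff, star_smul, hA.star_eq, ← neg_smul]
    congr 1
    simp
  have hUu : U ∈ unitary (ℋ →L[ℂ] ℋ) :=
    NormedSpace.exp_mem_unitary_of_mem_skewAdjoint (hskew t)
  have hU'u : U' ∈ unitary (ℋ →L[ℂ] ℋ) := by
    have := NormedSpace.exp_mem_unitary_of_mem_skewAdjoint (hskew (-t))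
    have e : Complex.I * ((-t : ℝ) : ℂ) = -(Complex.I * t) := by push_cast; ring
    rw [e] at this
    exact this
  have hUU' : U * U' = 1 := by
    rw [hU, hU', neg_smul]
    rw [← NormedSpace.exp_add_of_commute ((Commute.refl _).neg_right), add_neg_cancel,
      NormedSpace.exp_zero]
  have hc2 : U * S' = S' * U := by
    exact ((hcomm.smul_right (Complex.I * (t:ℂ))).exp_right).eq.symm
  have heq : U * S * U' - S = Z - U * Z * U' := by
    have : U * S' * U' = S' := by rw [hc2, mul_assoc, hUU', mul_one]
    rw [hZ, mul_sub, sub_mul, this]; abel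
  rw [heq]
  have hn : ‖U * Z * U'‖ = ‖Z‖ := by
    rw [CStarRing.norm_mul_mem_unitary _ hU'u, CStarRing.norm_mem_unitary_mul _ hUu]
  calc _ ≤ ‖Z‖ + ‖U * Z * U'‖ := norm_sub_le _ _
    _ ≤ _ := by rw [hn]; linarith

end aux

/-- Let `H = Σ_{k=1}^d h_k P_k` and let `S` be a bounded operator in the
bicommutant of `H` (i.e. `S` commutes with every bounded operator commuting
with `H`). Then for every `ε ∈ [0,1]` with `ε ≤ η/(vρ)` and every `t ∈ ℝ`,
`‖e^{it(H+εV(ε))} S e^{−it(H+εV(ε))} − S‖ ≤ β (v/η) ‖S‖ ε`. -/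
theorem stmt_0 {ℋ : Type*} [NormedAddCommGroup ℋ] [InnerProductSpace ℂ ℋ]
    [CompleteSpace ℋ]
    (d : ℕ) (P : Fin d → ℋ →L[ℂ] ℋ) (h : Fin d → ℝ)
    (hPsa : ∀ k, IsSelfAdjoint (P k))
    (hPidem : ∀ k, P k * P k = P k)
    (hPorth : ∀ k l, k ≠ l → P k * P l = 0)
    (hPsum : ∑ k, P k = 1)
    (hmono : StrictMono h)
    (η : ℝ) (hη : 0 < η)
    (hgap : ∀ k l, k ≠ l → η ≤ |h k - h l|)
    (H : ℋ →L[ℂ] ℋ) (hH : H = ∑ k, ((h k : ℂ)) • P k)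
    (V : ℝ → ℋ →L[ℂ] ℋ)
    (hVsa : ∀ ε ∈ Set.Icc (0 : ℝ) 1, IsSelfAdjoint (V ε))
    (v : ℝ) (hv : 0 < v)
    (hVbd : ∀ ε ∈ Set.Icc (0 : ℝ) 1, ‖V ε‖ ≤ v)
    (α β ρ : ℝ) (hα : 0 < α)
    (hαeq : (α + 1) * (Real.exp (2 / α) - 1) ≤ 3)
    (hβ : β = 16 * Real.pi * α / Real.sqrt 3 * (Real.exp (1 / (2 * α)) - 1))
    (hρ : ρ = 4 * Real.pi * α / Real.sqrt 3)
    (S : ℋ →L[ℂ] ℋ)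
    (hS : ∀ T : ℋ →L[ℂ] ℋ, T * H = H * T → S * T = T * S)
    (ε : ℝ) (hε : ε ∈ Set.Icc (0 : ℝ) 1) (hε' : ε ≤ η / (v * ρ)) (t : ℝ) :
    ‖NormedSpace.exp ((Complex.I * t) • (H + (ε : ℂ) • V ε)) * S *
        NormedSpace.exp ((-(Complex.I * t)) • (H + (ε : ℂ) • V ε)) - S‖ ≤
      β * (v / η) * ‖S‖ * ε := by
  have h3 : 0 < Real.sqrt 3 := Real.sqrt_pos.mpr (by norm_num)
  set C := Real.pi / Real.sqrt 3 with hC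
  have hC0 : 0 < C := div_pos Real.pi_pos h3
  have hρ' : ρ = 4 * α * C := by rw [hρ, hC]; ring
  have hβ' : β = 16 * α * C * (Real.exp (1 / (2 * α)) - 1) := by rw [hβ, hC]; ring
  have hα2 : 2 ≤ α := by
    have h1 := Real.add_one_le_exp (2 / α)
    have h2 : (α + 1) * (2 / α) ≤ 3 := by
      refine le_trans ?_ hαeq
      gcongr
      linarith
    rw [← mul_div_assoc, div_le_iff₀ hα] at h2
    linarith
  have hβ8 : 8 * C ≤ β := by
    have h1 := Real.add_one_le_exp (1 / (2 * α))
    rw [hβ']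
    calc 8 * C = 16 * α * C * (1 / (2 * α)) := by field_simp; norm_num
      _ ≤ _ := by gcongr; linarith
  have hε0 : 0 ≤ ε := hε.1
  set u := C * (v / η * ε) with hu
  have hu0 : 0 ≤ u := by positivity
  have hu8 : u ≤ 1 / 8 := by
    have h1 : ε * (v * ρ) ≤ η := by
      rwa [le_div_iff₀ (by rw [hρ']; positivity)] at hε'
    rw [hρ'] at h1
    have h2 : u = C * v * ε / η := by rw [hu]; ring
    rw [h2, div_le_iff₀ hη]
    have h4 : 0 ≤ C * v * ε := by positivity
    nlinarith [mul_le_mul_of_nonneg_left hα2 h4]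
  have hB : C / η * ‖(ε : ℂ) • V ε‖ ≤ u := by
    rw [norm_smul]
    simp only [Complex.norm_real, Real.norm_eq_abs, abs_of_nonneg hε0]
    have := hVbd ε hε
    calc C / η * (ε * ‖V ε‖) ≤ C / η * (ε * v) := by gcongr
      _ = u := by rw [hu]; ring
  obtain ⟨X, E, hX, hE, hXE⟩ := aux_X P h hPsa hPidem hPorth hPsum hmono η hη hgap H hH
    ((ε : ℂ) • V ε) u hB hu8
  have hHsa : IsSelfAdjoint H := by
    rw [hH]
    refine isSelfAdjoint_sum _ fun k _ => ?_
    exact IsSelfAdjoint.smul (by simp [IsSelfAdjoint]) (hPsa k)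
  have hAsa : IsSelfAdjoint (H + (ε : ℂ) • V ε) :=
    hHsa.add (IsSelfAdjoint.smul (by simp [IsSelfAdjoint]) (hVsa ε hε))
  have hSD : S * (H + E) = (H + E) * S := by
    rw [mul_add, add_mul, hS E hE, hS H rfl]
  refine (aux_final _ S _ X (H + E) hAsa rfl (8 / 5 * u) hX (by linarith) hXE hSD t).trans ?_
  have h5 : 8 / 5 * u / (1 - 8 / 5 * u) ≤ 2 * u := by
    rw [div_le_iff₀ (by linarith)]
    nlinarith
  calc 4 * ‖S‖ * (8 / 5 * u / (1 - 8 / 5 * u)) ≤ 4 * ‖S‖ * (2 * u) := by gcongr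
    _ = 8 * C * (v / η * ‖S‖ * ε) := by rw [hu]; ring
    _ ≤ β * (v / η * ‖S‖ * ε) := by gcongr
    _ = _ := by ring
end

section
/- Let H = Σ_{k=1}^d h_k P_k. Then there exists a family of bounded self-adjoint operators V̂(ε), ε ∈ [0,1], such that each V̂(ε) commutes with H, and for every ε ∈ [0,1] with ε ≤ η/(vρ) and every t ∈ ℝ, ‖e^{−it(H+εV(ε))} − e^{−it(H+εV̂(ε))}‖ ≤ (β/2)(v/η) ε (eternal block-diagonal approximation). -/
open scoped BigOperators
set_option linter.unusedSectionVars false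

namespace BD
variable {ℋ : Type*} [NormedAddCommGroup ℋ] [InnerProductSpace ℂ ℋ] [CompleteSpace ℋ]

/-- Schur multiplier. -/
noncomputable def M {d : ℕ} (P : Fin d → ℋ →L[ℂ] ℋ) (c : Fin d → Fin d → ℝ) (A : ℋ →L[ℂ] ℋ) :
    ℋ →L[ℂ] ℋ := ∑ k, ∑ l, (c k l : ℂ) • (P k * A * P l)

structure PF {d : ℕ} (P : Fin d → ℋ →L[ℂ] ℋ) : Prop where
  sa : ∀ k, IsSelfAdjoint (P k)
  idem : ∀ k, P k * P k = P k
  orth : ∀ k l, k ≠ l → P k * P l = 0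
  sum : ∑ k, P k = 1

variable {d : ℕ} {P : Fin d → ℋ →L[ℂ] ℋ}

lemma PF.mul (hP : PF P) (k l) : P k * P l = if k = l then P k else 0 := by
  split_ifs with h
  · subst h; exact hP.idem k
  · exact hP.orth k l h

lemma M_sub (c) (A B : ℋ →L[ℂ] ℋ) : M P c (A - B) = M P c A - M P c B := by
  simp [M, mul_sub, sub_mul, smul_sub, Finset.sum_sub_distrib]

lemma M_add (c) (A B : ℋ →L[ℂ] ℋ) : M P c (A + B) = M P c A + M P c B := by
  simp [M, mul_add, add_mul, smul_add, Finset.sum_add_distrib]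

lemma PF.PMP (hP : PF P) (c) (A : ℋ →L[ℂ] ℋ) (i j) :
    P i * M P c A * P j = (c i j : ℂ) • (P i * A * P j) := by
  have : ∀ k l, P i * ((c k l : ℂ) • (P k * A * P l)) * P j
      = if i = k then (if l = j then (c k l : ℂ) • (P i * A * P j) else 0) else 0 := by
    intro k l
    have : P i * ((c k l : ℂ) • (P k * A * P l)) * P j
       = (c k l : ℂ) • ((P i * P k) * A * (P l * P j)) := by
      simp only [mul_smul_comm, smul_mul_assoc, mul_assoc]
    rw [this, hP.mul, hP.mul]
    split_ifs with h1 h2 h2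
    · rw [h2]
    all_goals simp
  simp only [M, Finset.mul_sum, Finset.sum_mul, this]
  simp

lemma PF.ext (hP : PF P) {A B : ℋ →L[ℂ] ℋ} (h : ∀ i j, P i * A * P j = P i * B * P j) : A = B := by
  have : ∀ A : ℋ →L[ℂ] ℋ, A = ∑ i, ∑ j, P i * A * P j := by
    intro A
    calc A = (∑ i, P i) * A * (∑ j, P j) := by rw [hP.sum]; simp
      _ = _ := by simp only [Finset.sum_mul, Finset.mul_sum]; rw [Finset.sum_comm]
  rw [this A, this B]
  simp only [h]

lemma PF.norm_sq (hP : PF P) (x : ℋ) : ‖x‖ ^ 2 = ∑ k, ‖P k x‖ ^ 2 := by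
  have h1 : ∀ k, ((‖P k x‖ ^ 2 : ℝ) : ℂ) = inner ℂ x (P k x) := by
    intro k
    have := inner_self_eq_norm_sq_to_K (𝕜 := ℂ) (P k x)
    push_cast
    rw [show (((‖P k x‖ : ℝ) : ℂ)) ^ 2 = inner ℂ (P k x) (P k x) from this.symm]
    have h2 := (ContinuousLinearMap.isSelfAdjoint_iff_isSymmetric.1 (hP.sa k)) x (P k x)
    simp only [ContinuousLinearMap.coe_coe] at h2
    rw [h2]
    have : P k (P k x) = P k x := by
      rw [← mul_apply_eq_comp, hP.idem]
    rw [this]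
  have : ((‖x‖ ^ 2 : ℝ) : ℂ) = ((∑ k, ‖P k x‖ ^ 2 : ℝ) : ℂ) := by
    rw [Complex.ofReal_sum]
    simp only [h1]
    rw [← inner_sum, ← sum_apply, hP.sum]
    have := inner_self_eq_norm_sq_to_K (𝕜 := ℂ) x
    push_cast
    exact this.symm
  exact_mod_cast this

lemma PF.norm_M_le (hP : PF P) (c) (A : ℋ →L[ℂ] ℋ) (C : ℝ) (hC : 0 ≤ C)
    (hc : ∀ l, ∑ k, c k l ^ 2 ≤ C ^ 2) : ‖M P c A‖ ≤ C * ‖A‖ := by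
  refine ContinuousLinearMap.opNorm_le_bound _ (by positivity) fun x => ?_
  refine (sq_le_sq₀ (norm_nonneg _) (by positivity)).1 ?_
  set y : Fin d → ℋ := fun k => ∑ l, (c k l : ℂ) • P l x with hy
  have hPP : ∀ i j z, P i (P j z) = if i = j then P i z else 0 := by
    intro i j z
    rw [← mul_apply_eq_comp, hP.mul]
    split_ifs <;> simp
  have h1 : ∀ k, P k (M P c A x) = P k (A (y k)) := by
    intro k
    simp only [M, sum_apply, smul_apply,
      mul_apply_eq_comp, map_sum, map_smul, hPP, hy]
    rw [Finset.sum_comm]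
    simp
  have hPle : ∀ k z, ‖P k z‖ ≤ ‖z‖ := by
    intro k z
    refine (sq_le_sq₀ (norm_nonneg _) (by positivity)).1 ?_
    rw [hP.norm_sq z]
    exact Finset.single_le_sum (f := fun k => ‖P k z‖ ^ 2) (fun _ _ => by positivity)
      (Finset.mem_univ k)
  have h2 : ∀ k, ‖y k‖ ^ 2 = ∑ l, c k l ^ 2 * ‖P l x‖ ^ 2 := by
    intro k
    rw [hP.norm_sq]
    refine Finset.sum_congr rfl fun l _ => ?_
    have : P l (y k) = (c k l : ℂ) • P l x := by
      simp only [hy, map_sum, map_smul, hPP]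
      simp
    rw [this, norm_smul, mul_pow]
    simp
  calc ‖M P c A x‖ ^ 2 = ∑ k, ‖P k (A (y k))‖ ^ 2 := by rw [hP.norm_sq]; simp only [h1]
    _ ≤ ∑ k, ‖A‖ ^ 2 * ‖y k‖ ^ 2 := by
        refine Finset.sum_le_sum fun k _ => ?_
        rw [← mul_pow]
        exact pow_le_pow_left₀ (norm_nonneg _) ((hPle _ _).trans (A.le_opNorm _)) 2
    _ = ‖A‖ ^ 2 * ∑ l, (∑ k, c k l ^ 2) * ‖P l x‖ ^ 2 := by
        simp only [h2, ← Finset.mul_sum, Finset.sum_mul]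
        rw [Finset.sum_comm]
    _ ≤ ‖A‖ ^ 2 * ∑ l, C ^ 2 * ‖P l x‖ ^ 2 := by
        gcongr with l; exact hc l
    _ = (C * ‖A‖ * ‖x‖) ^ 2 := by
        rw [← Finset.mul_sum, ← hP.norm_sq]; ring

/-- the inverse gaps -/
noncomputable def gc (h : Fin d → ℝ) (k l : Fin d) : ℝ := if k = l then 0 else (h k - h l)⁻¹
/-- the diagonal -/
noncomputable def dc (k l : Fin d) : ℝ := if k = l then 1 else 0

lemma dc_bound (l : Fin d) : ∑ k, dc k l ^ 2 ≤ (1:ℝ) ^ 2 := by simp [dc]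

lemma half_sum (s : Finset (Fin d)) (f : Fin d → ℕ) (hf : Set.InjOn f s) :
    ∑ k ∈ s, 1 / (f k : ℝ) ^ 2 ≤ Real.pi ^ 2 / 6 := by
  rw [← Finset.sum_image (f := fun n : ℕ => 1 / (n : ℝ) ^ 2) hf]
  exact sum_le_hasSum _ (fun _ _ => by positivity) hasSum_zeta_two

lemma gap_lin {h : Fin d → ℝ} {η : ℝ} (hmono : StrictMono h)
    (hgap : ∀ k l, k ≠ l → η ≤ |h k - h l|) :
    ∀ (n : ℕ) (k l : Fin d), (l : ℕ) = k + n → n * η ≤ h l - h k := by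
  intro n
  induction n with
  | zero => intro k l hl; have : l = k := Fin.ext (by simpa using hl)
            simp [this]
  | succ n ih =>
    intro k l hl
    let m : Fin d := ⟨k + n, by have := l.2; omega⟩
    have h1 := ih k m rfl
    have hlt : m < l := by rw [Fin.lt_def]; simp [m]; omega
    have h2 := hgap l m hlt.ne'
    rw [abs_of_pos (sub_pos.2 (hmono hlt))] at h2
    push_cast; linarith

lemma gc_bound {h : Fin d → ℝ} {η : ℝ} (hη : 0 < η) (hmono : StrictMono h)
    (hgap : ∀ k l, k ≠ l → η ≤ |h k - h l|) (l : Fin d) :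
    ∑ k, gc h k l ^ 2 ≤ (Real.pi / (Real.sqrt 3 * η)) ^ 2 := by
  have key : ∀ k, gc h k l ^ 2 ≤ (if k < l then 1 / (((l - k : ℕ) : ℕ) : ℝ) ^ 2 else 0) / η ^ 2
      + (if l < k then 1 / (((k - l : ℕ) : ℕ) : ℝ) ^ 2 else 0) / η ^ 2 := by
    intro k
    have aux : ∀ a b : Fin d, a < b → ((h b - h a)⁻¹) ^ 2 ≤ 1 / (((b - a : ℕ) : ℕ) : ℝ) ^ 2 / η ^ 2 := by
      intro a b hab
      have hab' : (a : ℕ) < b := hab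
      have := gap_lin hmono hgap (b - a) a b (by omega)
      have hpos : (0:ℝ) < ((b - a : ℕ) : ℕ) := by exact_mod_cast (by omega)
      rw [div_div, ← mul_pow, inv_pow, one_div]
      gcongr
    rcases lt_trichotomy k l with hk | hk | hk
    · have := aux k l hk
      simp only [gc, hk.ne, hk, not_lt_of_gt hk, if_true, if_false, zero_div, add_zero]
      rw [← neg_sub, inv_neg, neg_sq]; exact this
    · simp [gc, hk]
    · have := aux l k hk
      simp only [gc, hk.ne', hk, not_lt_of_gt hk, if_true, if_false, zero_div, zero_add]
      exact this
  refine (Finset.sum_le_sum fun k _ => key k).trans ?_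
  rw [Finset.sum_add_distrib, ← Finset.sum_div, ← Finset.sum_div, ← Finset.sum_filter,
    ← Finset.sum_filter]
  have h1 := half_sum (Finset.univ.filter (fun k => k < l)) (fun k => (l - k : ℕ)) (by
    intro a ha b hb hab
    simp at ha hb hab
    rw [Fin.lt_def] at ha hb
    apply Fin.ext; omega)
  have h2 := half_sum (Finset.univ.filter (fun k => l < k)) (fun k => (k - l : ℕ)) (by
    intro a ha b hb hab
    simp at ha hb hab
    rw [Fin.lt_def] at ha hb
    apply Fin.ext; omega)
  have h3 : (Real.pi / (Real.sqrt 3 * η)) ^ 2 = (Real.pi ^ 2 / 6) / η ^ 2 + (Real.pi ^ 2 / 6) / η ^ 2 := by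
    rw [div_pow, mul_pow, Real.sq_sqrt (by norm_num)]
    field_simp; norm_num
  rw [h3]
  gcongr

lemma PF.bd_of (hP : PF P) {A : ℋ →L[ℂ] ℋ} (hA : ∀ i j, i ≠ j → P i * A * P j = 0) (k : Fin d) :
    P k * A = A * P k := by
  have h1 : P k * A = P k * A * P k := by
    calc P k * A = P k * A * ∑ j, P j := by rw [hP.sum, mul_one]
      _ = _ := by
        rw [Finset.mul_sum]
        exact Finset.sum_eq_single k (fun j _ hj => hA k j hj.symm) (by simp)
  have h2 : A * P k = P k * A * P k := by
    calc A * P k = (∑ j, P j) * (A * P k) := by rw [hP.sum, one_mul]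
      _ = _ := by
        rw [Finset.sum_mul]
        simp only [← mul_assoc]
        exact Finset.sum_eq_single k (fun j _ hj => hA j k hj) (by simp)
  rw [h1, ← h2]

lemma PF.off_of_bd (hP : PF P) {A : ℋ →L[ℂ] ℋ} (hA : ∀ k, P k * A = A * P k) {i j}
    (hij : i ≠ j) : P i * A * P j = 0 := by
  rw [hA, mul_assoc, hP.orth i j hij, mul_zero]

lemma PF.dc_bd (hP : PF P) (A : ℋ →L[ℂ] ℋ) (k : Fin d) : P k * M P dc A = M P dc A * P k := by
  refine hP.bd_of (fun i j hij => ?_) k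
  rw [hP.PMP]; simp [dc, hij]

lemma PF.PH (hP : PF P) (h : Fin d → ℝ) (i) : P i * (∑ k, (h k : ℂ) • P k) = (h i : ℂ) • P i := by
  simp only [Finset.mul_sum, mul_smul_comm, hP.mul]
  simp

lemma PF.HP (hP : PF P) (h : Fin d → ℝ) (i) : (∑ k, (h k : ℂ) • P k) * P i = (h i : ℂ) • P i := by
  simp only [Finset.sum_mul, smul_mul_assoc, hP.mul]
  simp

lemma PF.comm_gc (hP : PF P) {h : Fin d → ℝ} (hmono : StrictMono h) {H : ℋ →L[ℂ] ℋ}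
    (hH : H = ∑ k, (h k : ℂ) • P k) (Y : ℋ →L[ℂ] ℋ) :
    H * M P (gc h) Y - M P (gc h) Y * H = Y - M P dc Y := by
  refine hP.ext fun i j => ?_
  have e : P i * (H * M P (gc h) Y - M P (gc h) Y * H) * P j
      = ((h i : ℂ) - h j) • (P i * M P (gc h) Y * P j) := by
    have : P i * (H * M P (gc h) Y - M P (gc h) Y * H) * P j
      = (P i * H) * M P (gc h) Y * P j - P i * M P (gc h) Y * (H * P j) := by
      simp only [mul_sub, sub_mul, mul_assoc]
    rw [this, hH, hP.PH, hP.HP, sub_smul]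
    simp only [smul_mul_assoc, mul_smul_comm]
  rw [e, hP.PMP, mul_sub, sub_mul, hP.PMP, smul_smul]
  by_cases hij : i = j
  · subst hij; simp [gc, dc]
  · have : (h i : ℂ) - h j ≠ 0 := by
      rw [sub_ne_zero]; exact_mod_cast hmono.injective.ne hij
    simp [gc, dc, hij, this]

lemma PF.gc_comm (hP : PF P) {h : Fin d → ℝ} (hmono : StrictMono h) {H : ℋ →L[ℂ] ℋ}
    (hH : H = ∑ k, (h k : ℂ) • P k) (G : ℋ →L[ℂ] ℋ) :
    M P (gc h) (H * G - G * H) = G - M P dc G := by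
  refine hP.ext fun i j => ?_
  have e : P i * (H * G - G * H) * P j
      = ((h i : ℂ) - h j) • (P i * G * P j) := by
    have : P i * (H * G - G * H) * P j
      = (P i * H) * G * P j - P i * G * (H * P j) := by
      simp only [mul_sub, sub_mul, mul_assoc]
    rw [this, hH, hP.PH, hP.HP, sub_smul]
    simp only [smul_mul_assoc, mul_smul_comm]
  rw [hP.PMP, e, mul_sub, sub_mul, hP.PMP, smul_smul]
  by_cases hij : i = j
  · subst hij; simp [gc, dc]
  · have : (h i : ℂ) - h j ≠ 0 := by
      rw [sub_ne_zero]; exact_mod_cast hmono.injective.ne hij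
    simp [gc, dc, hij, this]

lemma PF.gc_bd (hP : PF P) {h : Fin d → ℝ} {A : ℋ →L[ℂ] ℋ} (hA : ∀ k, P k * A = A * P k) :
    M P (gc h) A = 0 := by
  refine hP.ext fun i j => ?_
  rw [hP.PMP]
  by_cases hij : i = j
  · simp [gc, hij]
  · simp [hP.off_of_bd hA hij]

lemma PF.dc_of_bd (hP : PF P) {A : ℋ →L[ℂ] ℋ} (hA : ∀ k, P k * A = A * P k) :
    M P dc A = A := by
  refine hP.ext fun i j => ?_
  rw [hP.PMP]
  by_cases hij : i = j
  · simp [dc, hij]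
  · simp [hP.off_of_bd hA hij]

lemma PF.dc_gc_mul (hP : PF P) {h : Fin d → ℝ} {B : ℋ →L[ℂ] ℋ} (hB : ∀ k, P k * B = B * P k)
    (Y : ℋ →L[ℂ] ℋ) : M P dc (M P (gc h) Y * B) = 0 := by
  refine hP.ext fun i j => ?_
  rw [hP.PMP]
  have : P i * (M P (gc h) Y * B) * P j = (P i * M P (gc h) Y * P j) * B := by
    simp only [mul_assoc, hB]
  rw [this, hP.PMP]
  by_cases hij : i = j
  · simp [gc, hij]
  · simp [dc, hij]

lemma PF.dc_star (hP : PF P) (A : ℋ →L[ℂ] ℋ) : M P dc (star A) = star (M P dc A) := by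
  have e : ∀ i, star (P i) = P i := fun i => (hP.sa i)
  simp only [M, star_sum, star_smul, star_mul, e, mul_assoc]
  rw [Finset.sum_comm]
  refine Finset.sum_congr rfl fun i _ => Finset.sum_congr rfl fun j _ => ?_
  simp [dc, eq_comm]

lemma fixed (hP : PF P) {h : Fin d → ℝ} {γ w g : ℝ} (hγ : 0 ≤ γ)
    (hc : ∀ l, ∑ k, gc h k l ^ 2 ≤ γ ^ 2) (W : ℋ →L[ℂ] ℋ) (hW : ‖W‖ ≤ w) (hg : γ * w = g)
    (hg16 : g ≤ 1 / 16) :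
    ∃ X, ‖X‖ ≤ 5 / 4 * g ∧
      X = M P (gc h) (X * M P dc (W * (1 + X)) - W * (1 + X)) := by
  set F : (ℋ →L[ℂ] ℋ) → (ℋ →L[ℂ] ℋ) :=
    fun X => M P (gc h) (X * M P dc (W * (1 + X)) - W * (1 + X)) with hF
  have hw : 0 ≤ w := (norm_nonneg _).trans hW
  have hg0 : 0 ≤ g := by rw [← hg]; positivity
  have hD : ∀ A, ‖M P dc A‖ ≤ ‖A‖ := fun A => by
    simpa using hP.norm_M_le dc A 1 zero_le_one dc_bound
  have hG : ∀ A, ‖M P (gc h) A‖ ≤ γ * ‖A‖ := fun A => hP.norm_M_le _ A γ hγ hc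
  have h1 : ∀ X : ℋ →L[ℂ] ℋ, ‖W * (1 + X)‖ ≤ w * (1 + ‖X‖) := by
    intro X
    refine (norm_mul_le _ _).trans ?_
    have : ‖(1 : ℋ →L[ℂ] ℋ) + X‖ ≤ 1 + ‖X‖ :=
      (norm_add_le _ _).trans (by gcongr; exact ContinuousLinearMap.norm_id_le)
    gcongr
  have hmaps : Set.MapsTo F (Metric.closedBall 0 (5 / 4 * g)) (Metric.closedBall 0 (5 / 4 * g)) := by
    intro X hX
    rw [mem_closedBall_zero_iff] at hX ⊢
    refine (hG _).trans ?_
    have a1 : ‖X * M P dc (W * (1 + X)) - W * (1 + X)‖ ≤ ‖X‖ * (w * (1 + ‖X‖)) + w * (1 + ‖X‖) := by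
      refine (norm_sub_le _ _).trans ?_
      gcongr
      · refine (norm_mul_le _ _).trans ?_
        gcongr
        exact (hD _).trans (h1 X)
      · exact h1 X
    calc γ * ‖X * M P dc (W * (1 + X)) - W * (1 + X)‖
        ≤ γ * (‖X‖ * (w * (1 + ‖X‖)) + w * (1 + ‖X‖)) := by gcongr
      _ = g * (1 + ‖X‖) ^ 2 := by rw [← hg]; ring
      _ ≤ g * (1 + 5 / 64) ^ 2 := by gcongr; linarith
      _ ≤ 5 / 4 * g := by nlinarith
  have hlip : ∀ X ∈ Metric.closedBall (0 : ℋ →L[ℂ] ℋ) (5 / 4 * g),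
      ∀ Y ∈ Metric.closedBall (0 : ℋ →L[ℂ] ℋ) (5 / 4 * g), dist (F X) (F Y) ≤ 1 / 2 * dist X Y := by
    intro X hX Y hY
    rw [mem_closedBall_zero_iff] at hX hY
    rw [dist_eq_norm, dist_eq_norm]
    have e : F X - F Y = M P (gc h) ((X - Y) * M P dc (W * (1 + X)) + Y * M P dc (W * (X - Y))
        - W * (X - Y)) := by
      simp only [hF]
      rw [← M_sub]
      congr 1
      have : W * (X - Y) = W * (1 + X) - W * (1 + Y) := by noncomm_ring
      rw [this, M_sub]; noncomm_ring
    rw [e]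
    refine (hG _).trans ?_
    have a2 : ‖W * (X - Y)‖ ≤ w * ‖X - Y‖ := (norm_mul_le _ _).trans (by gcongr)
    have a1 : ‖(X - Y) * M P dc (W * (1 + X)) + Y * M P dc (W * (X - Y)) - W * (X - Y)‖
        ≤ ‖X - Y‖ * (w * (1 + ‖X‖)) + ‖Y‖ * (w * ‖X - Y‖) + w * ‖X - Y‖ := by
      refine (norm_sub_le _ _).trans (add_le_add ((norm_add_le _ _).trans (add_le_add ?_ ?_)) a2)
      · refine (norm_mul_le _ _).trans ?_
        gcongr
        exact (hD _).trans (h1 X)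
      · refine (norm_mul_le _ _).trans ?_
        gcongr
        exact (hD _).trans a2
    calc _ ≤ γ * (‖X - Y‖ * (w * (1 + ‖X‖)) + ‖Y‖ * (w * ‖X - Y‖) + w * ‖X - Y‖) := by gcongr
      _ = g * (2 + ‖X‖ + ‖Y‖) * ‖X - Y‖ := by rw [← hg]; ring
      _ ≤ (1 / 16 * (2 + 1 + 1)) * ‖X - Y‖ := by gcongr <;> linarith
      _ ≤ 1 / 2 * ‖X - Y‖ := by gcongr; norm_num
  have hK : ContractingWith (1 / 2 : NNReal) (hmaps.restrict F _ _) := by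
    refine ⟨by rw [← NNReal.coe_lt_coe]; norm_num, LipschitzWith.of_dist_le_mul fun X Y => ?_⟩
    have := hlip X.1 X.2 Y.1 Y.2
    simpa [Subtype.dist_eq] using this
  obtain ⟨X, hX, hfix, -⟩ := ContractingWith.exists_fixedPoint' (f := F)
    (Metric.isClosed_closedBall.isComplete) hmaps hK (x := 0)
    (Metric.mem_closedBall_self (by positivity)) (edist_ne_top _ _)
  exact ⟨X, by simpa using hX, hfix.symm⟩

lemma invsqrt [Nontrivial ℋ] (G : ℋ →L[ℂ] ℋ) (hG : IsSelfAdjoint G) {s : ℝ} (hs : s ≤ 1 / 2)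
    (hGs : ‖G - 1‖ ≤ s) : ∃ T : ℋ →L[ℂ] ℋ, IsSelfAdjoint T ∧ T * G * T = 1 ∧ ‖T - 1‖ ≤ 2 * s ∧
      ∀ A, G * A = A * G → T * A = A * T := by
  have hs0 : 0 ≤ s := (norm_nonneg _).trans hGs
  have hsp : ∀ x ∈ spectrum ℝ G, |x - 1| ≤ s := by
    intro x hx
    have : x - 1 ∈ spectrum ℝ (G - 1) := by
      rw [spectrum.mem_iff] at hx ⊢
      convert hx using 2
      simp
    exact (spectrum.norm_le_norm_of_mem this).trans hGs
  have hpos : ∀ x ∈ spectrum ℝ G, 1 / 2 ≤ x := by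
    intro x hx; have := abs_le.1 (hsp x hx); linarith
  have hcont : ContinuousOn (fun x : ℝ => (√x)⁻¹) (spectrum ℝ G) := by
    refine ContinuousOn.inv₀ (by fun_prop) fun x hx => ?_
    have := hpos x hx
    positivity
  set f : ℝ → ℝ := fun x : ℝ => (√x)⁻¹ with hf
  refine ⟨cfc f G, cfc_predicate _ _, ?_, ?_, ?_⟩
  · have e : cfc f G * G = cfc (fun x => f x * x) G := by
      rw [cfc_mul f (fun x => x) G hcont continuousOn_id, cfc_id' ℝ G]
    rw [e, ← cfc_mul (fun x => f x * x) f G (hcont.mul continuousOn_id) hcont]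
    rw [← cfc_const_one ℝ G hG]
    refine cfc_congr fun x hx => ?_
    have := hpos x hx
    have h0 : 0 < x := by linarith
    have h1 : √x * √x = x := Real.mul_self_sqrt h0.le
    have h2 : 0 < √x := by positivity
    simp only [hf]
    field_simp
    linarith [Real.sq_sqrt h0.le]
  · have e : cfc f G - 1 = cfc (fun x => f x - 1) G := by
      rw [cfc_sub f (fun _ => 1) G hcont continuousOn_const, cfc_const_one ℝ G hG]
    rw [e]
    refine norm_cfc_le (by positivity) fun x hx => ?_
    have := hpos x hx
    have h0 : 0 < x := by linarith
    have h1 : √x * √x = x := Real.mul_self_sqrt h0.le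
    have h2 : 1 / 2 ≤ √x := Real.le_sqrt_of_sq_le (by nlinarith)
    have h3 : (√x)⁻¹ - 1 = (1 - x) / (√x * (1 + √x)) := by
      field_simp
      nlinarith
    simp only [hf]
    rw [h3, Real.norm_eq_abs, abs_div, abs_sub_comm, abs_of_pos (by positivity : 0 < √x * (1 + √x)),
      div_le_iff₀ (by positivity)]
    have := hsp x hx
    nlinarith
  · intro A hA
    exact (Commute.cfc_real hA _)

lemma core [Nontrivial ℋ] (hP : PF P) {h : Fin d → ℝ} (hmono : StrictMono h) {H : ℋ →L[ℂ] ℋ}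
    (hH : H = ∑ k, (h k : ℂ) • P k) {γ w g : ℝ} (hγ : 0 ≤ γ)
    (hc : ∀ l, ∑ k, gc h k l ^ 2 ≤ γ ^ 2) (W : ℋ →L[ℂ] ℋ) (hWsa : IsSelfAdjoint W)
    (hW : ‖W‖ ≤ w) (hg : γ * w = g) (hg16 : g ≤ 1 / 16) :
    ∃ U : ℋ →L[ℂ] ℋ, U * star U = 1 ∧ star U * U = 1 ∧ ‖U - 1‖ ≤ 2 * g ∧
      ∀ k, P k * (star U * (H + W) * U) = (star U * (H + W) * U) * P k := by
  obtain ⟨X, hX, hfix⟩ := fixed hP hγ hc W hW hg hg16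
  have hw : 0 ≤ w := (norm_nonneg _).trans hW
  have hg0 : 0 ≤ g := by rw [← hg]; positivity
  have hD : ∀ A, ‖M P dc A‖ ≤ ‖A‖ := fun A => by
    simpa using hP.norm_M_le dc A 1 zero_le_one dc_bound
  have hG : ∀ A, ‖M P (gc h) A‖ ≤ γ * ‖A‖ := fun A => hP.norm_M_le _ A γ hγ hc
  have hΩ : ‖(1 : ℋ →L[ℂ] ℋ) + X‖ ≤ 1 + 5 / 4 * g :=
      (norm_add_le _ _).trans (by rw [norm_one]; gcongr)
  set B := M P dc (W * (1 + X)) with hB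
  have hBbd : ∀ k, P k * B = B * P k := hP.dc_bd _
  have hPstar : ∀ k, star (P k) = P k := fun k => hP.sa k
  have hBsbd : ∀ k, P k * star B = star B * P k := by
    intro k
    have := congrArg star (hBbd k)
    rw [star_mul, star_mul, hPstar] at this
    exact this.symm
  have hHsa : star H = H := by
    rw [hH, star_sum]
    refine Finset.sum_congr rfl fun k _ => ?_
    rw [star_smul, hPstar]; simp
  have hHbd : ∀ k, P k * H = H * P k := by
    intro k; rw [hH, hP.PH, hP.HP]
  have hBn : ‖B‖ ≤ w * (1 + 5 / 4 * g) := by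
    refine (hD _).trans ((norm_mul_le _ _).trans ?_)
    gcongr
  have hDX : M P dc X = 0 := by
    have := hP.dc_gc_mul (h := h) (B := 1) (by simp) (X * B - W * (1 + X))
    rwa [← hfix, mul_one] at this
  have hDXB : M P dc (X * B) = 0 := by
    have := hP.dc_gc_mul (h := h) hBbd (X * B - W * (1 + X))
    rwa [← hfix] at this
  have hcomm := hP.comm_gc hmono hH (X * B - W * (1 + X))
  rw [← hfix, M_sub, hDXB, ← hB] at hcomm
  have hint : (H + W) * (1 + X) = (1 + X) * (H + B) := by
    have e : (H + W) * (1 + X) = (H * X - X * H) + X * H + H + W * (1 + X) := by noncomm_ring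
    rw [e, hcomm]; noncomm_ring
  set Ω := 1 + X with hΩd
  set G := star Ω * Ω with hGd
  have hGsa : star G = G := by rw [hGd, star_mul, star_star]
  have hWs : star W = W := hWsa
  have hGQ : G * (H + B) = star Ω * (H + W) * Ω := by
    rw [hGd, mul_assoc, ← hint, mul_assoc]
  have hQG : (H + star B) * G = star Ω * (H + W) * Ω := by
    have := congrArg star hGQ
    have hAs : star (H + W) = H + W := by rw [star_add, hHsa, hWs]
    rw [star_mul, hGsa, star_add H B, hHsa, star_mul, star_mul, star_star, hAs,
      ← mul_assoc] at this
    exact this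
  have hGcom : H * G - G * H = G * B - star B * G := by
    have := hGQ.trans hQG.symm
    rw [mul_add, add_mul] at this
    rw [sub_eq_sub_iff_add_eq_add, ← this]; abel
  set DG := M P dc G with hDG
  have hDGbd : ∀ k, P k * DG = DG * P k := hP.dc_bd _
  have hO : G - DG = M P (gc h) ((G - DG) * B - star B * (G - DG)) := by
    have e1 := hP.gc_comm hmono hH G
    rw [hGcom] at e1
    have e2 : M P (gc h) (DG * B - star B * DG) = 0 := by
      refine hP.gc_bd fun k => ?_
      rw [mul_sub, sub_mul, ← mul_assoc, hDGbd, mul_assoc, hBbd, mul_assoc, ← mul_assoc (P k), hBsbd,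
        mul_assoc, hDGbd, mul_assoc]
    have e3 : (G - DG) * B - star B * (G - DG) =
        (G * B - star B * G) - (DG * B - star B * DG) := by noncomm_ring
    rw [e3, M_sub, e2, sub_zero, e1]
  have hO0 : G - DG = 0 := by
    have h1 : ‖G - DG‖ ≤ γ * (‖G - DG‖ * ‖B‖ + ‖B‖ * ‖G - DG‖) := by
      conv_lhs => rw [hO]
      refine (hG _).trans ?_
      gcongr
      refine (norm_sub_le _ _).trans (add_le_add (norm_mul_le _ _) ((norm_mul_le _ _).trans ?_))
      rw [norm_star]
    have h2 : γ * ‖B‖ ≤ 1 / 8 := by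
      calc γ * ‖B‖ ≤ γ * (w * (1 + 5 / 4 * g)) := by gcongr
        _ = g * (1 + 5 / 4 * g) := by rw [← hg]; ring
        _ ≤ 1 / 8 := by nlinarith
    have h3 : ‖G - DG‖ ≤ 1 / 4 * ‖G - DG‖ := by
      nlinarith [norm_nonneg (G - DG)]
    have := norm_nonneg (G - DG)
    exact norm_eq_zero.1 (by linarith)
  have hGD : G = DG := sub_eq_zero.1 hO0
  have hGbd : ∀ k, P k * G = G * P k := by rw [hGD]; exact hDGbd
  have hG1 : G - 1 = M P dc (star X * X) := by
    have e : G = 1 + X + star X + star X * X := by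
      rw [hGd, hΩd, star_add, star_one]; noncomm_ring
    have e1 : M P dc (1 : ℋ →L[ℂ] ℋ) = 1 := hP.dc_of_bd (by simp)
    rw [hGD, hDG, e, M_add, M_add, M_add, e1, hDX, hP.dc_star, hDX]
    simp
  have hG1n : ‖G - 1‖ ≤ 5 / 4 * g * (5 / 4 * g) := by
    rw [hG1]
    refine (hD _).trans ((norm_mul_le _ _).trans ?_)
    rw [norm_star]
    gcongr
  obtain ⟨T, hTsa, hTGT, hTn, hTc⟩ := invsqrt G hGsa (by nlinarith) hG1n
  have hTs : star T = T := hTsa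
  have hTbd : ∀ k, T * P k = P k * T := fun k => hTc _ (hGbd k).symm
  have hUn : ‖Ω * T - 1‖ ≤ 2 * g := by
    have e : Ω * T - 1 = Ω * (T - 1) + X := by rw [mul_sub, hΩd]; noncomm_ring
    rw [e]
    refine (norm_add_le _ _).trans ?_
    calc ‖Ω * (T - 1)‖ + ‖X‖ ≤ (1 + 5 / 4 * g) * (2 * (5 / 4 * g * (5 / 4 * g))) + 5 / 4 * g := by
          gcongr
          refine (norm_mul_le _ _).trans ?_
          gcongr
      _ ≤ (1 + 5 / 4 * (1 / 16)) * (2 * (5 / 4 * g * (5 / 4 * (1 / 16)))) + 5 / 4 * g := by gcongr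
      _ ≤ 2 * g := by linarith
  have hUU : star (Ω * T) * (Ω * T) = 1 := by
    rw [star_mul, hTs, ← hTGT, hGd]; simp only [mul_assoc]
  refine ⟨Ω * T, ?_, hUU, hUn, fun k => ?_⟩
  · let u := Units.oneSub (1 - Ω * T) (by rw [norm_sub_rev]; linarith)
    have hu : (u : ℋ →L[ℂ] ℋ) = Ω * T := by simp [u]
    have : star (Ω * T) = ((u⁻¹ : (ℋ →L[ℂ] ℋ)ˣ) : ℋ →L[ℂ] ℋ) := by
      rw [← hu] at hUU ⊢
      exact Units.eq_inv_of_mul_eq_one_right hUU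
    rw [this, ← hu]; simp
  · have e : star (Ω * T) * (H + W) * (Ω * T) = T * (G * (H + B)) * T := by
      rw [hGQ, star_mul, hTs]; simp only [mul_assoc]
    rw [e]
    have c1 : Commute (P k) T := (hTbd k).symm
    have c2 : Commute (P k) G := hGbd k
    have c3 : Commute (P k) H := hHbd k
    have c4 : Commute (P k) B := hBbd k
    exact (c1.mul_right (c2.mul_right (c3.add_right c4))).mul_right c1

lemma sa_smul {A : ℋ →L[ℂ] ℋ} (hA : IsSelfAdjoint A) (r : ℝ) : IsSelfAdjoint ((r : ℂ) • A) := by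
  have h1 : star A = A := hA
  have h2 : star (r : ℂ) = r := Complex.conj_ofReal r
  rw [IsSelfAdjoint, star_smul, h1, h2]

lemma exp_diff [Nontrivial ℋ] (A U : ℋ →L[ℂ] ℋ) (hA : IsSelfAdjoint A) (h1 : U * star U = 1)
    (h2 : star U * U = 1) (t : ℝ) :
    ‖NormedSpace.exp ((-(Complex.I * t)) • A) -
      NormedSpace.exp ((-(Complex.I * t)) • (star U * A * U))‖ ≤ 2 * ‖U - 1‖ := by
  let u : (ℋ →L[ℂ] ℋ)ˣ := ⟨star U, U, h2, h1⟩
  have e : NormedSpace.exp ((-(Complex.I * t)) • (star U * A * U))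
      = star U * NormedSpace.exp ((-(Complex.I * t)) • A) * U := by
    let _ : NormedAlgebra ℚ (ℋ →L[ℂ] ℋ) := NormedAlgebra.restrictScalars ℚ ℂ _
    have := NormedSpace.exp_units_conj u ((-(Complex.I * t)) • A)
    simpa [u, mul_smul_comm, smul_mul_assoc] using this
  rw [e]
  have hsa : IsSelfAdjoint (((-t : ℝ) : ℂ) • A) := sa_smul hA _
  have hEu := (selfAdjoint.expUnitary ⟨((-t : ℝ) : ℂ) • A, hsa⟩).2
  have hE : ((selfAdjoint.expUnitary ⟨((-t : ℝ) : ℂ) • A, hsa⟩ : unitary (ℋ →L[ℂ] ℋ)) : ℋ →L[ℂ] ℋ)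
      = NormedSpace.exp ((-(Complex.I * t)) • A) := by
    rw [selfAdjoint.expUnitary_coe]
    congr 1
    simp only
    rw [smul_smul]
    congr 1
    push_cast; ring
  rw [hE] at hEu
  set E := NormedSpace.exp ((-(Complex.I * t)) • A)
  have hEn : ‖E‖ = 1 := CStarRing.norm_of_mem_unitary hEu
  have hUn : ‖star U‖ = 1 := CStarRing.norm_of_mem_unitary
    (Unitary.mem_iff.2 ⟨by rw [star_star]; exact h1, by rw [star_star]; exact h2⟩)
  have e2 : E - star U * E * U = star U * ((U - 1) * E - E * (U - 1)) := by
    have : E = star U * U * E := by rw [h2, one_mul]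
    conv_lhs => enter [1]; rw [this]
    noncomm_ring
  rw [e2]
  calc _ ≤ ‖star U‖ * (‖U - 1‖ * ‖E‖ + ‖E‖ * ‖U - 1‖) := by
        refine (norm_mul_le _ _).trans ?_
        gcongr
        exact (norm_sub_le _ _).trans (add_le_add (norm_mul_le _ _) (norm_mul_le _ _))
    _ = _ := by rw [hUn, hEn]; ring

lemma alpha_ge {α : ℝ} (hα : 0 < α) (h : (α + 1) * (Real.exp (2 / α) - 1) ≤ 3) : 4 ≤ α := by
  have h1 := Real.quadratic_le_exp_of_nonneg (x := 2 / α) (by positivity)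
  by_contra! hlt
  have h2 : (α + 1) * (2 / α + (2 / α) ^ 2 / 2) ≤ 3 :=
    le_trans (by gcongr; linarith) h
  have h3 : (α + 1) * (2 / α + (2 / α) ^ 2 / 2) = 2 * (α + 1) ^ 2 / α ^ 2 := by
    field_simp
  rw [h3, div_le_iff₀ (by positivity)] at h2
  nlinarith

end BD

/-- Eternal block-diagonal approximation. Let `H = Σ_{k=1}^d h_k P_k`. Then
there exists a family of bounded self-adjoint operators `V̂(ε)`, `ε ∈ [0,1]`,
each commuting with `H`, such that for every `ε ∈ [0,1]` with `ε ≤ η/(vρ)` and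
every `t ∈ ℝ`,
`‖e^{−it(H+εV(ε))} − e^{−it(H+εV̂(ε))}‖ ≤ (β/2)(v/η) ε`. -/
theorem stmt_1 {ℋ : Type*} [NormedAddCommGroup ℋ] [InnerProductSpace ℂ ℋ]
    [CompleteSpace ℋ]
    (d : ℕ) (P : Fin d → ℋ →L[ℂ] ℋ) (h : Fin d → ℝ)
    (hPsa : ∀ k, IsSelfAdjoint (P k))
    (hPidem : ∀ k, P k * P k = P k)
    (hPorth : ∀ k l, k ≠ l → P k * P l = 0)
    (hPsum : ∑ k, P k = 1)
    (hmono : StrictMono h)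
    (η : ℝ) (hη : 0 < η)
    (hgap : ∀ k l, k ≠ l → η ≤ |h k - h l|)
    (H : ℋ →L[ℂ] ℋ) (hH : H = ∑ k, ((h k : ℂ)) • P k)
    (V : ℝ → ℋ →L[ℂ] ℋ)
    (hVsa : ∀ ε ∈ Set.Icc (0 : ℝ) 1, IsSelfAdjoint (V ε))
    (v : ℝ) (hv : 0 < v)
    (hVbd : ∀ ε ∈ Set.Icc (0 : ℝ) 1, ‖V ε‖ ≤ v)
    (α β ρ : ℝ) (hα : 0 < α)
    (hαeq : (α + 1) * (Real.exp (2 / α) - 1) ≤ 3)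
    (hβ : β = 16 * Real.pi * α / Real.sqrt 3 * (Real.exp (1 / (2 * α)) - 1))
    (hρ : ρ = 4 * Real.pi * α / Real.sqrt 3) :
    ∃ Vhat : ℝ → ℋ →L[ℂ] ℋ,
      (∀ ε ∈ Set.Icc (0 : ℝ) 1,
        IsSelfAdjoint (Vhat ε) ∧ Vhat ε * H = H * Vhat ε) ∧
      ∀ ε ∈ Set.Icc (0 : ℝ) 1, ε ≤ η / (v * ρ) → ∀ t : ℝ,
        ‖NormedSpace.exp ((-(Complex.I * t)) • (H + (ε : ℂ) • V ε)) -
            NormedSpace.exp ((-(Complex.I * t)) • (H + (ε : ℂ) • Vhat ε))‖ ≤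
          β / 2 * (v / η) * ε := by
  classical
  rcases subsingleton_or_nontrivial ℋ with hs | hs
  · refine ⟨fun _ => 0, fun ε _ => ⟨by simp [IsSelfAdjoint], by simp⟩, fun ε hε _ t => ?_⟩
    rw [Subsingleton.elim (NormedSpace.exp ((-(Complex.I * t)) • (H + (ε : ℂ) • V ε)))
      (NormedSpace.exp ((-(Complex.I * t)) • (H + (ε : ℂ) • (0 : ℋ →L[ℂ] ℋ)))), sub_self, norm_zero]
    have h1 : 0 ≤ Real.exp (1 / (2 * α)) - 1 := by
      have := Real.one_le_exp (x := 1 / (2 * α)) (by positivity); linarith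
    have := hε.1
    rw [hβ]
    positivity
  have hP : BD.PF P := ⟨hPsa, hPidem, hPorth, hPsum⟩
  have hα4 := BD.alpha_ge hα hαeq
  have hpi := Real.pi_pos
  have hs3 : 0 < √(3:ℝ) := by positivity
  set γ := Real.pi / (√3 * η) with hγ
  have hγ0 : 0 < γ := by positivity
  have hρ0 : 0 < ρ := by rw [hρ]; positivity
  have hHsa : IsSelfAdjoint H := by
    rw [hH]
    refine isSelfAdjoint_sum _ fun k _ => ?_
    exact BD.sa_smul (hPsa k) _
  have key : ∀ ε : ℝ, ε ∈ Set.Icc (0 : ℝ) 1 → ε ≤ η / (v * ρ) → ∃ Q : ℋ →L[ℂ] ℋ,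
      IsSelfAdjoint Q ∧ Q * H = H * Q ∧ ∀ t : ℝ,
      ‖NormedSpace.exp ((-(Complex.I * t)) • (H + (ε : ℂ) • V ε)) -
            NormedSpace.exp ((-(Complex.I * t)) • Q)‖ ≤ β / 2 * (v / η) * ε := by
    intro ε hε hερ
    have hε0 := hε.1
    have hWsa : IsSelfAdjoint ((ε : ℂ) • V ε) := BD.sa_smul (hVsa ε hε) _
    have hWn : ‖(ε : ℂ) • V ε‖ ≤ ε * v := by
      rw [norm_smul, Complex.norm_real, Real.norm_of_nonneg hε0]
      gcongr
      exact hVbd ε hε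
    have hg16 : γ * (ε * v) ≤ 1 / 16 := by
      calc γ * (ε * v) ≤ γ * (η / (v * ρ) * v) := by gcongr
        _ = 1 / (4 * α) := by rw [hγ, hρ]; field_simp
        _ ≤ 1 / 16 := by
          rw [div_le_div_iff₀ (by positivity) (by norm_num)]; linarith
    obtain ⟨U, h1, h2, hUn, hc⟩ := BD.core hP hmono hH hγ0.le (BD.gc_bound hη hmono hgap) _ hWsa hWn
      rfl hg16
    refine ⟨star U * (H + (ε : ℂ) • V ε) * U, ?_, ?_, fun t => ?_⟩
    · exact (hHsa.add hWsa).conjugate' U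
    · generalize star U * (H + (ε : ℂ) • V ε) * U = R at hc
      rw [hH, Finset.mul_sum, Finset.sum_mul]
      refine Finset.sum_congr rfl fun k _ => ?_
      rw [mul_smul_comm, smul_mul_assoc, hc]
    · refine (BD.exp_diff _ U (hHsa.add hWsa) h1 h2 t).trans ?_
      have hb : 4 * Real.pi / √3 ≤ β / 2 := by
        have h3 := Real.add_one_le_exp (1 / (2 * α))
        have h4 : 1 / (2 * α) ≤ Real.exp (1 / (2 * α)) - 1 := by linarith
        calc 4 * Real.pi / √3 = 16 * Real.pi * α / √3 * (1 / (2 * α)) / 2 := by field_simp; norm_num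
          _ ≤ β / 2 := by rw [hβ]; gcongr
      calc 2 * ‖U - 1‖ ≤ 2 * (2 * (γ * (ε * v))) := by gcongr
        _ = 4 * Real.pi / √3 * (v / η) * ε := by rw [hγ]; field_simp; ring
        _ ≤ _ := by gcongr
  choose! Q hQ using key
  refine ⟨fun ε => if ε ∈ Set.Icc (0 : ℝ) 1 ∧ ε ≤ η / (v * ρ) ∧ ε ≠ 0 then
    ((ε⁻¹ : ℝ) : ℂ) • (Q ε - H) else 0, fun ε _ => ?_, fun ε hε hερ t => ?_⟩
  · beta_reduce
    split_ifs with hif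
    · obtain ⟨q1, q2, -⟩ := hQ ε hif.1 hif.2.1
      refine ⟨BD.sa_smul (q1.sub hHsa) _, ?_⟩
      rw [smul_mul_assoc, mul_smul_comm, sub_mul, mul_sub, q2]
    · exact ⟨by simp [IsSelfAdjoint], by simp⟩
  · by_cases h0 : ε = 0
    · subst h0; simp
    · have hif : ε ∈ Set.Icc (0 : ℝ) 1 ∧ ε ≤ η / (v * ρ) ∧ ε ≠ 0 := ⟨hε, hερ, h0⟩
      have e : H + (ε : ℂ) • (((ε⁻¹ : ℝ) : ℂ) • (Q ε - H)) = Q ε := by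
        rw [smul_smul, ← Complex.ofReal_mul, mul_inv_cancel₀ h0]
        simp
      simp only [if_pos hif]
      rw [e]
      exact (hQ ε hε hερ).2.2 t
end

section
/- Let H = Σ_{k=1}^d h_k P_k, where P_1,…,P_d are pairwise orthogonal self-adjoint projections on a complex Hilbert space ℋ with P_1 + ⋯ + P_d = I, and h_1 < ⋯ < h_d are real numbers with h_{k+1} − h_k ≥ η > 0 for all k. Let B be a bounded operator on ℋ. Then the operator X = i Σ_{k≠ℓ} (h_k − h_ℓ)^{−1} P_k B P_ℓ is the unique bounded operator satisfying both (i) i(XH − HX) = B − Σ_{k=1}^d P_k B P_k and (ii) Σ_{k=1}^d P_k X P_k = 0 (homological equation). Moreover ‖X‖ ≤ (π/(√3 η)) ‖B‖, and if B is self-adjoint then X is self-adjoint. -/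
open scoped BigOperators


lemma hom_sum_sq (d : ℕ) (g : Fin d → ℕ) (T : Finset (Fin d)) (hg : Set.InjOn g T) :
    ∑ l ∈ T, 1 / ((g l : ℕ) : ℝ) ^ 2 ≤ Real.pi ^ 2 / 6 := by
  rw [← Finset.sum_image (f := fun n : ℕ => 1 / (n : ℝ) ^ 2) hg]
  exact sum_le_hasSum _ (fun _ _ => by positivity) hasSum_zeta_two

lemma hom_gap (d : ℕ) (h : Fin d → ℝ) (η : ℝ)
    (hgap : ∀ k : Fin d, ∀ hk : (k : ℕ) + 1 < d, η ≤ h ⟨(k : ℕ) + 1, hk⟩ - h k)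
    (n : ℕ) : ∀ k l : Fin d, (l : ℕ) = k + n → η * n ≤ h l - h k := by
  induction n with
  | zero =>
    intro k l e
    have : l = k := Fin.ext (by simpa using e)
    subst this; simp
  | succ n ih =>
    intro k l e
    have hl := l.2
    have h1 := ih k ⟨k + n, by omega⟩ rfl
    have h2 := hgap ⟨k + n, by omega⟩ (by simp; omega)
    have h3 : l = ⟨(k : ℕ) + n + 1, by omega⟩ := Fin.ext (by simp; omega)
    rw [h3]
    push_cast
    simp only at h2
    linarith

lemma hom_term (a η n : ℝ) (hη : 0 < η) (hn : 0 < n) (h : η * n ≤ a) :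
    (a⁻¹) ^ 2 ≤ (η⁻¹) ^ 2 * (1 / n ^ 2) := by
  have : a⁻¹ ≤ (η * n)⁻¹ := inv_anti₀ (by positivity) h
  have ha : 0 < a := lt_of_lt_of_le (by positivity) h
  calc (a⁻¹) ^ 2 ≤ ((η * n)⁻¹) ^ 2 := by gcongr
    _ = _ := by field_simp

lemma hom_row (d : ℕ) (h : Fin d → ℝ) (η : ℝ) (hη : 0 < η)
    (hgap : ∀ k : Fin d, ∀ hk : (k : ℕ) + 1 < d, η ≤ h ⟨(k : ℕ) + 1, hk⟩ - h k)
    (k : Fin d) : ∑ l, ((h k - h l)⁻¹) ^ 2 ≤ (Real.pi / (Real.sqrt 3 * η)) ^ 2 := by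
  have hb : ∀ l, ((h k - h l)⁻¹) ^ 2 ≤ (η⁻¹) ^ 2 *
      ((if l < k then 1 / (((k : ℕ) - (l : ℕ) : ℕ) : ℝ) ^ 2 else 0) +
       (if k < l then 1 / (((l : ℕ) - (k : ℕ) : ℕ) : ℝ) ^ 2 else 0)) := by
    intro l
    rcases lt_trichotomy l k with hl | hl | hl
    · rw [if_pos hl, if_neg (not_lt.2 hl.le), add_zero]
      have hl' : (l : ℕ) < k := hl
      apply hom_term _ _ _ hη (by exact_mod_cast Nat.sub_pos_of_lt hl')
      exact hom_gap d h η hgap _ l k (by omega)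
    · subst hl; simp
    · rw [if_neg (not_lt.2 hl.le), if_pos hl, zero_add]
      have hl' : (k : ℕ) < l := hl
      rw [← neg_sub, inv_neg, neg_sq]
      apply hom_term _ _ _ hη (by exact_mod_cast Nat.sub_pos_of_lt hl')
      exact hom_gap d h η hgap _ k l (by omega)
  refine (Finset.sum_le_sum fun l _ => hb l).trans ?_
  rw [← Finset.mul_sum, Finset.sum_add_distrib, ← Finset.sum_filter, ← Finset.sum_filter]
  have h1 := hom_sum_sq d (fun l => (k : ℕ) - (l : ℕ)) (Finset.univ.filter fun l => l < k) (by
    intro a ha b hb hab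
    simp at ha hb hab
    have ha' : (a : ℕ) < k := ha
    have hb' : (b : ℕ) < k := hb
    exact Fin.ext (by omega))
  have h2 := hom_sum_sq d (fun l => (l : ℕ) - (k : ℕ)) (Finset.univ.filter fun l => k < l) (by
    intro a ha b hb hab
    simp at ha hb hab
    have ha' : (k : ℕ) < a := ha
    have hb' : (k : ℕ) < b := hb
    exact Fin.ext (by omega))
  calc _ ≤ (η⁻¹) ^ 2 * (Real.pi ^ 2 / 6 + Real.pi ^ 2 / 6) := by gcongr
    _ = _ := by
      rw [div_pow, mul_pow, Real.sq_sqrt (by norm_num)]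
      field_simp; norm_num

section
variable {ℋ : Type*} [NormedAddCommGroup ℋ] [InnerProductSpace ℂ ℋ] [CompleteSpace ℋ]

lemma hom_normsq (d : ℕ) (P : Fin d → ℋ →L[ℂ] ℋ)
    (hPsa : ∀ k, IsSelfAdjoint (P k))
    (hPidem : ∀ k, P k * P k = P k)
    (hPorth : ∀ k l, k ≠ l → P k * P l = 0) (c : Fin d → ℂ) (u : ℋ) :
    ‖∑ k, c k • P k u‖ ^ 2 = ∑ k, ‖c k‖ ^ 2 * ‖P k u‖ ^ 2 := by
  have horth : ∀ k l, k ≠ l → inner ℂ (P k u) (P l u) = 0 := by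
    intro k l hkl
    have h1 := (ContinuousLinearMap.isSelfAdjoint_iff_isSymmetric.1 (hPsa k)) u (P l u)
    have h2 : P k (P l u) = 0 := by
      rw [← mul_apply_eq_comp, hPorth k l hkl]; simp
    simp only [ContinuousLinearMap.coe_coe] at h1
    rw [h1, h2, inner_zero_right]
  have hn : ∀ w : ℋ, inner ℂ w w = ((‖w‖ ^ 2 : ℝ) : ℂ) := by
    intro w; rw [inner_self_eq_norm_sq_to_K]; push_cast; rfl
  have h3 : inner ℂ (∑ k, c k • P k u) (∑ k, c k • P k u)
      = ((∑ k, ‖c k‖ ^ 2 * ‖P k u‖ ^ 2 : ℝ) : ℂ) := by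
    rw [sum_inner]
    push_cast
    refine Finset.sum_congr rfl fun k _ => ?_
    rw [inner_sum, Finset.sum_eq_single k]
    · rw [hn, norm_smul]; push_cast; ring
    · intro l _ hl
      rw [inner_smul_left, inner_smul_right, horth k l hl.symm]; simp
    · simp
  rw [hn] at h3
  exact_mod_cast h3

lemma hom_bound (d : ℕ) (P : Fin d → ℋ →L[ℂ] ℋ)
    (hPsa : ∀ k, IsSelfAdjoint (P k))
    (hPidem : ∀ k, P k * P k = P k)
    (hPorth : ∀ k l, k ≠ l → P k * P l = 0)
    (hPsum : ∑ k, P k = 1) (B : ℋ →L[ℂ] ℋ) (m : Fin d → Fin d → ℝ) (C : ℝ) (hC : 0 ≤ C)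
    (hm : ∀ k, ∑ l, (m k l) ^ 2 ≤ C ^ 2) :
    ‖∑ k, ∑ l, (m k l : ℂ) • (P k * B * P l)‖ ≤ C * ‖B‖ := by
  have hsum : ∀ u : ℋ, ∑ k, ‖P k u‖ ^ 2 = ‖u‖ ^ 2 := by
    intro u
    have := hom_normsq d P hPsa hPidem hPorth (fun _ => 1) u
    simp only [one_smul, norm_one, one_pow, one_mul] at this
    rw [← this, ← _root_.sum_apply, hPsum]; simp
  refine ContinuousLinearMap.opNorm_le_bound _ (by positivity) fun v => ?_
  set X := ∑ k, ∑ l, (m k l : ℂ) • (P k * B * P l) with hX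
  set u := X v with hu
  let A : Fin d → ℋ := fun l => ∑ k, (m k l : ℂ) • P k u
  have hin : inner ℂ u u = ∑ l, inner ℂ (A l) (B (P l v)) := by
    conv_lhs => rw [hu]
    nth_rewrite 1 [← hu]
    rw [hX, _root_.sum_apply, inner_sum]
    simp only [_root_.sum_apply, inner_sum, A, sum_inner]
    rw [Finset.sum_comm]
    refine Finset.sum_congr rfl fun l _ => Finset.sum_congr rfl fun k _ => ?_
    have h1 := (ContinuousLinearMap.isSelfAdjoint_iff_isSymmetric.1 (hPsa k)) u (B (P l v))
    simp only [ContinuousLinearMap.coe_coe] at h1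
    rw [inner_smul_left, h1]
    rw [ContinuousLinearMap.smul_apply, inner_smul_right, Complex.conj_ofReal]
    rfl
  have h1 : ‖u‖ ^ 2 ≤ ∑ l, ‖A l‖ * (‖B‖ * ‖P l v‖) := by
    have : ‖inner ℂ u u‖ = ‖u‖ ^ 2 := by
      rw [inner_self_eq_norm_sq_to_K]; simp
    rw [← this, hin]
    refine (norm_sum_le _ _).trans (Finset.sum_le_sum fun l _ => ?_)
    refine (norm_inner_le_norm _ _).trans ?_
    gcongr
    exact B.le_opNorm _
  have h2 : ∑ l, ‖A l‖ ^ 2 ≤ C ^ 2 * ‖u‖ ^ 2 := by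
    simp only [A, hom_normsq d P hPsa hPidem hPorth]
    rw [Finset.sum_comm, ← hsum u, Finset.mul_sum]
    refine Finset.sum_le_sum fun k _ => ?_
    rw [← Finset.sum_mul]
    gcongr
    simpa using hm k
  have h3 : (∑ l, ‖A l‖ * ‖P l v‖) ^ 2 ≤ (C * ‖u‖ * ‖v‖) ^ 2 := by
    refine (Finset.sum_mul_sq_le_sq_mul_sq _ _ _).trans ?_
    rw [hsum v, mul_pow, mul_pow]
    gcongr
  have h4 : ∑ l, ‖A l‖ * ‖P l v‖ ≤ C * ‖u‖ * ‖v‖ := abs_le_of_sq_le_sq' h3 (by positivity) |>.2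
  have h5 : ‖u‖ ^ 2 ≤ ‖B‖ * (C * ‖u‖ * ‖v‖) := by
    refine h1.trans ?_
    calc _ = ‖B‖ * ∑ l, ‖A l‖ * ‖P l v‖ := by
          rw [Finset.mul_sum]; exact Finset.sum_congr rfl fun l _ => by ring
      _ ≤ _ := by gcongr
  rcases (norm_nonneg u).eq_or_lt with h0 | h0
  · rw [← h0]; positivity
  · have : ‖u‖ * ‖u‖ ≤ ‖u‖ * (C * ‖B‖ * ‖v‖) := by nlinarith
    exact le_of_mul_le_mul_left this h0
end

/-- Homological equation. Let `H = Σ_{k=1}^d h_k P_k` with pairwise orthogonal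
self-adjoint projections summing to the identity and eigenvalues with adjacent
gaps at least `η > 0`. Let `B` be a bounded operator. Then
`X = i Σ_{k ≠ ℓ} (h_k − h_ℓ)⁻¹ P_k B P_ℓ` is the unique bounded operator such
that (i) `i[X, H] = B − Σ_k P_k B P_k` and (ii) `Σ_k P_k X P_k = 0`. Moreover
`‖X‖ ≤ (π/(√3 η)) ‖B‖`, and if `B` is self-adjoint then so is `X`. -/
theorem stmt_6 {ℋ : Type*} [NormedAddCommGroup ℋ] [InnerProductSpace ℂ ℋ]
    [CompleteSpace ℋ]
    (d : ℕ) (P : Fin d → ℋ →L[ℂ] ℋ) (h : Fin d → ℝ)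
    (hPsa : ∀ k, IsSelfAdjoint (P k))
    (hPidem : ∀ k, P k * P k = P k)
    (hPorth : ∀ k l, k ≠ l → P k * P l = 0)
    (hPsum : ∑ k, P k = 1)
    (η : ℝ) (hη : 0 < η)
    (hgap : ∀ k : Fin d, ∀ hk : (k : ℕ) + 1 < d, η ≤ h ⟨(k : ℕ) + 1, hk⟩ - h k)
    (B : ℋ →L[ℂ] ℋ)
    (H X : ℋ →L[ℂ] ℋ)
    (hH : H = ∑ k, ((h k : ℂ)) • P k)
    (hX : X = Complex.I •
      ∑ k, ∑ l, if k = l then 0 else (((h k : ℂ) - (h l : ℂ))⁻¹) • (P k * B * P l)) :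
    (Complex.I • (X * H - H * X) = B - ∑ k, P k * B * P k) ∧
    (∑ k, P k * X * P k = 0) ∧
    (∀ Y : ℋ →L[ℂ] ℋ,
      Complex.I • (Y * H - H * Y) = B - ∑ k, P k * B * P k →
      (∑ k, P k * Y * P k = 0) → Y = X) ∧
    ‖X‖ ≤ Real.pi / (Real.sqrt 3 * η) * ‖B‖ ∧
    (IsSelfAdjoint B → IsSelfAdjoint X) := by
  have hm0 : ∀ k l, k ≠ l → (h k : ℂ) - h l ≠ 0 := by
    intro k l hkl e
    have e' : h k = h l := by exact_mod_cast sub_eq_zero.1 e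
    rcases lt_or_gt_of_ne hkl with hl | hl
    · have hl' : (k : ℕ) < l := hl
      have h1 := hom_gap d h η hgap (l - k) k l (by omega)
      have h2 : (0 : ℝ) < ((l - k : ℕ) : ℝ) := by exact_mod_cast Nat.sub_pos_of_lt hl'
      nlinarith [mul_pos hη h2]
    · have hl' : (l : ℕ) < k := hl
      have h1 := hom_gap d h η hgap (k - l) l k (by omega)
      have h2 : (0 : ℝ) < ((k - l : ℕ) : ℝ) := by exact_mod_cast Nat.sub_pos_of_lt hl'
      nlinarith [mul_pos hη h2]
  have hX' : X = Complex.I • ∑ k, ∑ l, (((h k - h l)⁻¹ : ℝ) : ℂ) • (P k * B * P l) := by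
    rw [hX]; congr 1
    refine Finset.sum_congr rfl fun k _ => Finset.sum_congr rfl fun l _ => ?_
    split_ifs with e
    · subst e; simp
    · push_cast; rfl
  have hPP : ∀ k l, P k * P l = if k = l then P k else 0 := by
    intro k l; split_ifs with e
    · subst e; exact hPidem k
    · exact hPorth k l e
  have hPH : ∀ a, P a * H = (h a : ℂ) • P a := by
    intro a; rw [hH, Finset.mul_sum]; simp [mul_smul_comm, hPP]
  have hHP : ∀ a, H * P a = (h a : ℂ) • P a := by
    intro a; rw [hH, Finset.sum_mul]; simp [smul_mul_assoc, hPP]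
  have hD : ∀ (S : ℋ →L[ℂ] ℋ) a b, P a * (∑ k, P k * S * P k) * P b
      = if a = b then P a * S * P b else 0 := by
    intro S a b
    rw [Finset.mul_sum, Finset.sum_mul]
    have : ∀ k, P a * (P k * S * P k) * P b = (P a * P k) * S * (P k * P b) := by
      intro k; simp only [mul_assoc]
    simp only [this, hPP]
    rw [Finset.sum_eq_single a]
    · by_cases e : a = b <;> simp [e]
    · intro k _ hk; simp [hk.symm]
    · simp
  have hPX : ∀ a b, P a * X * P b = (Complex.I * ((h a : ℂ) - h b)⁻¹) • (P a * B * P b) := by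
    intro a b
    rw [hX', mul_smul_comm, smul_mul_assoc, mul_smul]; congr 1
    rw [Finset.mul_sum, Finset.sum_mul, Finset.sum_eq_single a]
    · rw [Finset.mul_sum, Finset.sum_mul, Finset.sum_eq_single b]
      · rw [mul_smul_comm, smul_mul_assoc]
        have : P a * (P a * B * P b) * P b = (P a * P a) * B * (P b * P b) := by
          simp only [mul_assoc]
        rw [this, hPidem, hPidem]; push_cast; rfl
      · intro l _ hl
        rw [mul_smul_comm, smul_mul_assoc]
        have : P a * (P a * B * P l) * P b = (P a * P a) * B * (P l * P b) := by
          simp only [mul_assoc]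
        rw [this, hPorth l b hl]; simp
      · simp
    · intro k _ hk
      rw [Finset.mul_sum, Finset.sum_mul]
      refine Finset.sum_eq_zero fun l _ => ?_
      rw [mul_smul_comm, smul_mul_assoc]
      have : P a * (P k * B * P l) * P b = (P a * P k) * B * (P l * P b) := by
        simp only [mul_assoc]
      rw [this, hPorth a k hk.symm]; simp
    · simp
  have hext : ∀ S T : ℋ →L[ℂ] ℋ, (∀ a b, P a * S * P b = P a * T * P b) → S = T := by
    intro S T hST
    have key : ∀ S : ℋ →L[ℂ] ℋ, S = ∑ a, ∑ b, P a * S * P b := by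
      intro S
      simp only [← Finset.mul_sum, ← Finset.sum_mul, hPsum, one_mul, mul_one]
    rw [key S, key T]
    simp only [hST]
  have hcomm : ∀ (Y : ℋ →L[ℂ] ℋ) a b, P a * (Complex.I • (Y * H - H * Y)) * P b
      = (Complex.I * ((h b : ℂ) - h a)) • (P a * Y * P b) := by
    intro Y a b
    have : P a * (Y * H - H * Y) * P b = P a * Y * (H * P b) - (P a * H) * Y * P b := by
      simp only [mul_sub, sub_mul, mul_assoc]
    rw [mul_smul_comm, smul_mul_assoc, this, hPH, hHP, mul_smul, sub_smul]
    simp only [mul_smul_comm, smul_mul_assoc]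
  refine ⟨?_, ?_, ?_, ?_, ?_⟩
  · apply hext
    intro a b
    rw [hcomm, hPX, mul_sub (P a), sub_mul (P a * B), hD, smul_smul]
    by_cases e : a = b
    · subst e; simp
    · rw [if_neg e, sub_zero]
      have h1 := hm0 a b e
      have h2 : Complex.I * ((h b : ℂ) - h a) * (Complex.I * ((h a : ℂ) - h b)⁻¹) = 1 := by
        have : Complex.I * ((h b : ℂ) - h a) * (Complex.I * ((h a : ℂ) - h b)⁻¹)
          = -(Complex.I * Complex.I) * (((h a : ℂ) - h b) * ((h a : ℂ) - h b)⁻¹) := by ring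
        rw [this, mul_inv_cancel₀ h1, Complex.I_mul_I]; simp
      rw [h2, one_smul]
  · simp [hPX]
  · intro Y hY1 hY2
    apply hext
    intro a b
    rw [hPX]
    by_cases e : a = b
    · subst e
      have := hD Y a a
      rw [hY2] at this
      simpa using this.symm
    · have h3 := hcomm Y a b
      rw [hY1, mul_sub, sub_mul, hD, if_neg e, sub_zero] at h3
      have h1 := hm0 a b e
      have h2 : (Complex.I * ((h a : ℂ) - h b)⁻¹) * (Complex.I * ((h b : ℂ) - h a)) = 1 := by
        have : (Complex.I * ((h a : ℂ) - h b)⁻¹) * (Complex.I * ((h b : ℂ) - h a))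
          = -(Complex.I * Complex.I) * (((h a : ℂ) - h b) * ((h a : ℂ) - h b)⁻¹) := by ring
        rw [this, mul_inv_cancel₀ h1, Complex.I_mul_I]; simp
      rw [h3, smul_smul, h2, one_smul]
  · rw [hX', norm_smul, Complex.norm_I, one_mul]
    exact hom_bound d P hPsa hPidem hPorth hPsum B (fun k l => (h k - h l)⁻¹) _ (by positivity)
      (hom_row d h η hη hgap)
  · intro hB
    apply hext
    intro a b
    have h1 : P a * star X * P b = star (P b * X * P a) := by
      simp only [star_mul, (hPsa _).star_eq, mul_assoc]
    rw [h1, hPX, hPX, star_smul]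
    simp only [star_mul, (hPsa _).star_eq, hB.star_eq, ← mul_assoc]
    congr 1
    simp only [Complex.star_def, map_inv₀, map_sub, Complex.conj_I, Complex.conj_ofReal]
    rw [← neg_sub (h a : ℂ), inv_neg]; ring
end

section
/- Let η > 0 and let h : ℕ → ℝ satisfy h(k+1) − h(k) ≥ η for all k. Then for every k, the family (1/(h(k) − h(ℓ))²)_{ℓ ≠ k} is summable and Σ_{ℓ ≠ k} 1/(h(k) − h(ℓ))² ≤ π²/(3η²). -/
/-- Let `η > 0` and let `h : ℕ → ℝ` satisfy `h (k+1) − h k ≥ η` for all `k`.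
Then for every `k`, the family `(1/(h k − h ℓ)²)_{ℓ ≠ k}` is summable and
`Σ_{ℓ ≠ k} 1/(h k − h ℓ)² ≤ π²/(3η²)`. -/
theorem stmt_7 (η : ℝ) (hη : 0 < η) (h : ℕ → ℝ)
    (hgap : ∀ k : ℕ, η ≤ h (k + 1) - h k) (k : ℕ) :
    Summable (fun ℓ : {ℓ : ℕ // ℓ ≠ k} => 1 / (h k - h ℓ) ^ 2) ∧
    ∑' ℓ : {ℓ : ℕ // ℓ ≠ k}, 1 / (h k - h ℓ) ^ 2 ≤ Real.pi ^ 2 / (3 * η ^ 2) := by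
  have hg : ∀ a d : ℕ, η * d ≤ h (a + d) - h a := by
    intro a d
    induction d with
    | zero => simp
    | succ d ih =>
      have := hgap (a + d)
      rw [← add_assoc]
      push_cast
      linarith
  have hF0 : HasSum (fun m : ℤ => (1 : ℝ) / (m : ℝ) ^ 2) (Real.pi ^ 2 / 3) := by
    have := HasSum.of_nat_of_neg (f := fun m : ℤ => (1 : ℝ) / (m : ℝ) ^ 2)
      (g := Real.pi ^ 2 / 6) (g' := Real.pi ^ 2 / 6)
      (by simpa using hasSum_zeta_two) (by simpa using hasSum_zeta_two)
    have e : Real.pi ^ 2 / 6 + Real.pi ^ 2 / 6 - (1 : ℝ) / (((0 : ℤ) : ℝ)) ^ 2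
        = Real.pi ^ 2 / 3 := by
      norm_num
      ring
    exact e ▸ this
  have hF := hF0.mul_left (1 / η ^ 2)
  have hinj : Function.Injective (fun ℓ : {ℓ : ℕ // ℓ ≠ k} => (k : ℤ) - (ℓ : ℕ)) := by
    intro a b hab
    apply Subtype.ext
    simp only at hab
    omega
  have hle : ∀ ℓ : {ℓ : ℕ // ℓ ≠ k}, 1 / (h k - h ℓ) ^ 2 ≤
      1 / η ^ 2 * (1 / (((k : ℤ) - (ℓ : ℕ) : ℤ) : ℝ) ^ 2) := by
    rintro ⟨ℓ, hl⟩
    have key : (η * ((k : ℝ) - ℓ)) ^ 2 ≤ (h k - h ℓ) ^ 2 := by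
      rcases le_total k ℓ with hkl | hkl
      · obtain ⟨d, rfl⟩ := Nat.exists_eq_add_of_le hkl
        have := hg k d
        have h0 : 0 ≤ η * d := by positivity
        push_cast
        nlinarith
      · obtain ⟨d, rfl⟩ := Nat.exists_eq_add_of_le hkl
        have := hg ℓ d
        have h0 : 0 ≤ η * d := by positivity
        push_cast
        nlinarith
    have hne : (k : ℝ) - ℓ ≠ 0 := sub_ne_zero.mpr (by exact_mod_cast hl.symm)
    push_cast
    rw [one_div_mul_one_div, ← mul_pow]
    exact one_div_le_one_div_of_le (by positivity) key
  have hs : Summable (fun ℓ : {ℓ : ℕ // ℓ ≠ k} => 1 / (h k - h ℓ) ^ 2) :=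
    Summable.of_nonneg_of_le (fun _ => by positivity) hle (hF.summable.comp_injective hinj)
  refine ⟨hs, ?_⟩
  have := Summable.tsum_le_tsum_of_inj _ hinj (fun _ _ => by positivity) hle hs hF.summable
  rw [hF.tsum_eq] at this
  refine this.trans (le_of_eq ?_)
  field_simp
end

section
/- For every real α > 0 and every real x with 0 ≤ x ≤ 1, one has exp((1 − √(1 − x))/(2α)) − 1 ≤ x/(4α) + c x², where c = e^{1/(2α)} − 1 − 1/(4α). (Quadratic upper bound for f_α(x) = exp((1 − √(1 − x))/(2α)) − 1.) -/
lemma aux_exp (k u : ℝ) (hk : 0 ≤ k) (hu : 0 ≤ u) (hu1 : u ≤ 1) :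
    Real.exp (k * u) - 1 - k * u ≤ u ^ 2 * (Real.exp k - 1 - k) := by
  have h : ∀ y : ℝ, HasSum (fun n : ℕ => y ^ (n + 2) / ((n + 2).factorial : ℝ))
      (Real.exp y - 1 - y) := by
    intro y
    have h1 : HasSum (fun n : ℕ => y ^ n / (n.factorial : ℝ)) (Real.exp y) := by
      rw [Real.exp_eq_exp_ℝ]
      exact NormedSpace.expSeries_div_hasSum_exp y
    have h2 := (hasSum_nat_add_iff' 2).2 h1
    have h3 : Real.exp y - ∑ i ∈ Finset.range 2, y ^ i / (i.factorial : ℝ)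
        = Real.exp y - 1 - y := by
      simp [Finset.sum_range_succ]
      ring
    rw [h3] at h2
    exact h2
  refine hasSum_le ?_ (h (k * u)) ((h k).mul_left (u ^ 2))
  intro n
  have h3 : u ^ (n + 2) ≤ u ^ 2 := pow_le_pow_of_le_one hu hu1 (by omega)
  have h4 : 0 ≤ k ^ (n + 2) / ((n + 2).factorial : ℝ) := by positivity
  calc (k * u) ^ (n + 2) / ((n + 2).factorial : ℝ)
      = u ^ (n + 2) * (k ^ (n + 2) / ((n + 2).factorial : ℝ)) := by rw [mul_pow]; ring
    _ ≤ _ := mul_le_mul_of_nonneg_right h3 h4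

/-- For every real `α > 0` and every real `x` with `0 ≤ x ≤ 1`, one has
`exp((1 − √(1 − x))/(2α)) − 1 ≤ x/(4α) + c x²`, where
`c = e^{1/(2α)} − 1 − 1/(4α)`. -/
theorem stmt_16 (α : ℝ) (hα : 0 < α) (x : ℝ) (hx0 : 0 ≤ x) (hx1 : x ≤ 1) :
    Real.exp ((1 - Real.sqrt (1 - x)) / (2 * α)) - 1 ≤
      x / (4 * α) + (Real.exp (1 / (2 * α)) - 1 - 1 / (4 * α)) * x ^ 2 := by
  obtain ⟨k, hk⟩ : ∃ k, k = 1 / (2 * α) := ⟨_, rfl⟩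
  obtain ⟨u, hu⟩ : ∃ u, u = 1 - Real.sqrt (1 - x) := ⟨_, rfl⟩
  have hk0 : 0 ≤ k := by rw [hk]; positivity
  have hs := Real.sq_sqrt (show 0 ≤ 1 - x by linarith)
  have hs0 := Real.sqrt_nonneg (1 - x)
  have hs1 : Real.sqrt (1 - x) ≤ 1 := Real.sqrt_le_one.2 (by linarith)
  have hu0 : 0 ≤ u := by linarith
  have hu1 : u ≤ 1 := by linarith
  have hx : x = u * (2 - u) := by rw [hu]; linarith
  have e1 : (1 - Real.sqrt (1 - x)) / (2 * α) = k * u := by rw [hk, hu]; ring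
  have e2 : x / (4 * α) = k * (x / 2) := by rw [hk]; field_simp; norm_num
  have e3 : 1 / (4 * α) = k / 2 := by rw [hk]; field_simp; norm_num
  rw [e1, e2, e3, ← hk]
  have h1 := aux_exp k u hk0 hu0 hu1
  have h2 : 0 ≤ Real.exp k - 1 - k := by linarith [Real.add_one_le_exp k]
  have hux : u ≤ x := by rw [hx]; nlinarith
  have h3 := mul_le_mul_of_nonneg_right (pow_le_pow_left₀ hu0 hux 2) h2
  have h4 : u ≤ (x + x ^ 2) / 2 := by
    have h5 : 0 ≤ u * (u * (1 - u) * (3 - u)) :=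
      mul_nonneg hu0 (mul_nonneg (mul_nonneg hu0 (by linarith)) (by linarith))
    rw [hx]; nlinarith
  have h6 := mul_le_mul_of_nonneg_left h4 hk0
  linarith
end
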